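/- There exists a sequence of integers d(1), d(2), d(3), … such that for every real number q with 0 < q < 1, the series ∑_{n=1}^∞ n·d(n)·q^n converges absolutely and 2q · E(q^2)^8 E(q^5)^3 / E(q)^7 = ∑_{n=1}^∞ n·d(n)·q^n; in particular d(1) = 2, d(2) = 7, d(3) = 18, d(4) = 42. -/

import Mathlib

open Real

/-- Euler's product `E(q) = ∏_{j=1}^∞ (1 - q^j)`. -/
noncomputable def eulerE (q : ℝ) : ℝ := ∏' j : ℕ, (1 - q ^ (j + 1))

open Filter Topology

/-- infinite q-Pochhammer -/
noncomputable def PQ (q x : ℝ) : ℝ := ∏' j : ℕ, (1 - x * q ^ j)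

lemma PQ_mult {q : ℝ} (h0 : 0 < q) (h1 : q < 1) (x : ℝ) :
    Multipliable (fun j : ℕ => (1 - x * q ^ j)) := by
  have : Summable (fun j : ℕ => ‖- (x * q ^ j)‖) := by
    simp only [norm_neg, norm_mul, norm_pow]
    apply Summable.mul_left
    apply summable_geometric_of_lt_one (norm_nonneg _)
    rwa [Real.norm_of_nonneg h0.le]
  simpa [sub_eq_add_neg] using multipliable_one_add_of_summable this

lemma PQ_tendsto {q : ℝ} (h0 : 0 < q) (h1 : q < 1) (x : ℝ) :
    Tendsto (fun n : ℕ => ∏ j ∈ Finset.range n, (1 - x * q ^ j)) atTop (𝓝 (PQ q x)) :=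
  (PQ_mult h0 h1 x).hasProd.tendsto_prod_nat

lemma PQ_tendsto' {q : ℝ} (h0 : 0 < q) (h1 : q < 1) :
    Tendsto (fun n : ℕ => ∏ j ∈ Finset.range n, (1 - q ^ (j+1))) atTop (𝓝 (PQ q q)) := by
  have := PQ_tendsto h0 h1 q
  simpa only [← pow_succ'] using this

lemma fac_mem {q : ℝ} (h0 : 0 < q) (h1 : q < 1) (j : ℕ) : 0 < 1 - q ^ (j+1) ∧ 1 - q^(j+1) ≤ 1 := by
  have := pow_lt_one₀ h0.le h1 (Nat.succ_ne_zero j)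
  have h3 := pow_pos h0 (j+1)
  constructor
  · simpa using this
  · linarith

lemma PQ_ne {q x : ℝ} (h0 : 0 < q) (h1 : q < 1) (hx : ∀ j : ℕ, 1 - x * q ^ j ≠ 0) : PQ q x ≠ 0 := by
  have : Summable (fun j : ℕ => ‖- (x * q ^ j)‖) := by
    simp only [norm_neg, norm_mul, norm_pow]
    apply Summable.mul_left
    apply summable_geometric_of_lt_one (norm_nonneg _)
    rwa [Real.norm_of_nonneg h0.le]
  have := tprod_one_add_ne_zero_of_summable (f := fun j : ℕ => - (x * q ^ j)) (by simpa [sub_eq_add_neg] using hx) this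
  simpa [PQ, sub_eq_add_neg] using this

lemma PQ_pos {q x : ℝ} (h0 : 0 < q) (h1 : q < 1) (hx0 : 0 < x) (hx : x < 1) : 0 < PQ q x := by
  have hf : ∀ j : ℕ, 0 < 1 - x * q ^ j := by
    intro j
    have : q ^ j ≤ 1 := pow_le_one₀ h0.le h1.le
    have h3 := pow_pos h0 j
    nlinarith
  refine lt_of_le_of_ne ?_ (PQ_ne h0 h1 (fun j => (hf j).ne')).symm
  exact ge_of_tendsto' (PQ_tendsto h0 h1 x) (fun n => Finset.prod_nonneg (fun j _ => (hf j).le))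

lemma PQ_split {q : ℝ} (h0 : 0 < q) (h1 : q < 1) (x : ℝ) (m : ℕ) (hm : 0 < m) :
    PQ q x = ∏ i ∈ Finset.range m, PQ (q ^ m) (x * q ^ i) := by
  have h0' := pow_pos h0 m
  have h1' := pow_lt_one₀ h0.le h1 hm.ne'
  have t1 : Tendsto (fun n : ℕ => ∏ i ∈ Finset.range m, ∏ j ∈ Finset.range n, (1 - x * q ^ i * (q ^ m) ^ j))
      atTop (𝓝 (∏ i ∈ Finset.range m, PQ (q ^ m) (x * q ^ i))) :=
    tendsto_finsetProd _ (fun i _ => PQ_tendsto h0' h1' _)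
  have t2 := (PQ_tendsto h0 h1 x).comp (tendsto_id.const_mul_atTop' hm)
  refine tendsto_nhds_unique t2 (t1.congr ?_)
  intro n
  simp only [Function.comp, id]
  induction n with
  | zero => simp
  | succ n ih =>
    rw [Nat.mul_succ, Finset.prod_range_add, ← ih, ← Finset.prod_mul_distrib]
    apply Finset.prod_congr rfl
    intro i _
    rw [Finset.prod_range_succ, pow_add, ← pow_mul]
    ring

lemma PQ_neg {q : ℝ} (h0 : 0 < q) (h1 : q < 1) (x : ℝ) :
    PQ q x * PQ q (-x) = PQ (q^2) (x^2) := by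
  have h1' := pow_lt_one₀ h0.le h1 (two_ne_zero)
  refine tendsto_nhds_unique ((PQ_tendsto h0 h1 x).mul (PQ_tendsto h0 h1 (-x)))
    ((PQ_tendsto (pow_pos h0 2) h1' (x^2)).congr ?_)
  intro n
  rw [← Finset.prod_mul_distrib]
  apply Finset.prod_congr rfl
  intro i _
  ring

lemma PQ_head {q : ℝ} (h0 : 0 < q) (h1 : q < 1) (x : ℝ) :
    PQ q x = (1 - x) * PQ q (x * q) := by
  refine tendsto_nhds_unique ((PQ_tendsto h0 h1 x).comp (tendsto_add_atTop_nat 1))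
    (((PQ_tendsto h0 h1 (x*q)).const_mul (1-x)).congr ?_)
  intro n
  simp only [Function.comp]
  rw [Finset.prod_range_succ', mul_comm]
  simp only [pow_zero, mul_one]
  congr 1
  apply Finset.prod_congr rfl
  intro i _
  ring

lemma eulerE_eq (q : ℝ) : eulerE q = PQ q q := by
  unfold eulerE PQ
  simp only [← pow_succ']

/-- Gaussian binomials -/
noncomputable def gb (q : ℝ) : ℕ → ℕ → ℝ
  | _, 0 => 1
  | 0, _+1 => 0
  | N+1, k+1 => gb q N k + q^(k+1) * gb q N (k+1)

lemma gb_zero (q : ℝ) (N : ℕ) : gb q N 0 = 1 := by cases N <;> rfl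
lemma gb_gt (q : ℝ) : ∀ N k, N < k → gb q N k = 0 := by
  intro N
  induction N with
  | zero => intro k hk; cases k with
    | zero => omega
    | succ k => rfl
  | succ N ih => intro k hk; cases k with
    | zero => omega
    | succ k =>
      show gb q N k + q^(k+1) * gb q N (k+1) = 0
      rw [ih k (by omega), ih (k+1) (by omega)]; simp

noncomputable def pf (q : ℝ) (n : ℕ) : ℝ := ∏ j ∈ Finset.range n, (1 - q ^ (j+1))

lemma pf_succ (q : ℝ) (n : ℕ) : pf q (n+1) = pf q n * (1 - q^(n+1)) := Finset.prod_range_succ _ _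

lemma gb_mul (q : ℝ) : ∀ n a b, a + b = n → gb q (a+b) a * (pf q a * pf q b) = pf q (a+b) := by
  intro n
  induction n with
  | zero =>
    intro a b h
    obtain ⟨rfl, rfl⟩ : a = 0 ∧ b = 0 := by omega
    simp [gb_zero, pf]
  | succ n ih =>
    intro a b h
    cases a with
    | zero => simp [gb_zero, pf]
    | succ a =>
      cases b with
      | zero =>
        have h1 := ih a 0 (by omega)
        have e : gb q (a+1) (a+1) = gb q a a + q^(a+1) * gb q (a) (a+1) := rfl
        simp only [Nat.add_zero] at h1 ⊢
        rw [e, gb_gt q a (a+1) (by omega), pf_succ]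
        linear_combination (1-q^(a+1)) * h1
      | succ b =>
        have h1 := ih a (b+1) (by omega)
        have h2 := ih (a+1) b (by omega)
        have e : gb q (a+1+(b+1)) (a+1) = gb q (a+(b+1)) a + q^(a+1) * gb q (a+1+b) (a+1) := by
          rw [show a+1+(b+1) = (a+(b+1))+1 by ring, show a+1+b = a+(b+1) by ring]; rfl
        have e2 : pf q (a+1+(b+1)) = pf q (a+(b+1)) * (1 - q^(a+b+2)) := by
          rw [show a+1+(b+1) = (a+(b+1))+1 by ring, pf_succ]
          rw [show a + (b+1)+1 = a+b+2 by ring]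
        have e3 : pf q (a+1+b) = pf q (a+(b+1)) := by rw [show a+1+b = a+(b+1) by ring]
        rw [e3] at h2
        rw [e, e2]
        have ha := pf_succ q a
        have hb := pf_succ q b
        have key : gb q (a+(b+1)) a * (pf q (a+1) * pf q (b+1)) = (1-q^(a+1)) * pf q (a+(b+1)) := by
          rw [← h1, ha]; ring
        have key2 : gb q (a+1+b) (a+1) * (pf q (a+1) * pf q (b+1)) = (1-q^(b+1)) * pf q (a+(b+1)) := by
          rw [← h2, hb]; ring
        linear_combination key + q^(a+1) * key2

lemma cauchy_binom (q : ℝ) : ∀ (N : ℕ) (x : ℝ), ∏ j ∈ Finset.range N, (1 + x * q^j) =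
    ∑ k ∈ Finset.range (N+1), q^(k*(k-1)/2) * gb q N k * x^k := by
  intro N
  induction N with
  | zero => intro x; simp [gb_zero]
  | succ N ih =>
    intro x
    rw [Finset.prod_range_succ']
    have : ∏ k ∈ Finset.range N, (1 + x * q ^ (k + 1)) = ∏ k ∈ Finset.range N, (1 + (x*q) * q ^ k) := by
      apply Finset.prod_congr rfl; intro i _; ring
    rw [this, ih, Finset.sum_range_succ' _ (N+1)]
    have e1 : ∀ k, q^((k+1)*(k+1-1)/2) * gb q (N+1) (k+1) * x^(k+1) =
        q^((k+1)*(k+1-1)/2) * gb q N (k+1) * (x*q)^(k+1) + x * (q^(k*(k-1)/2) * gb q N k * (x*q)^k) := by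
      intro k
      have : (k+1)*(k+1-1)/2 = k*(k-1)/2 + k := by
        cases k with
        | zero => rfl
        | succ k =>
          rw [show (k+1+1)*(k+1+1-1) = (k+1)*(k+1-1) + (k+1)*2 by simp; ring]
          rw [Nat.add_mul_div_right _ _ (by norm_num)]
      rw [this]
      show _ * (gb q N k + q^(k+1) * gb q N (k+1)) * _ = _
      rw [pow_add]; ring
    rw [Finset.sum_congr rfl (fun k _ => e1 k), Finset.sum_add_distrib, ← Finset.mul_sum]
    have e2 := Finset.sum_range_succ' (fun k => q^(k*(k-1)/2) * gb q N k * (x*q)^k) (N+1)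
    rw [Finset.sum_range_succ, gb_gt q N (N+1) (by omega)] at e2
    simp only [gb_zero] at e2 ⊢
    simp at e2 ⊢
    linear_combination e2


lemma summ_aux {r : ℝ} (h0 : 0 < r) (h1 : r < 1) {z : ℝ} (hz : z ≠ 0) (A B : ℤ) (hA : 0 < A) (k : ℕ) :
    Summable (fun n : ℤ => (|n| : ℝ)^k * (|z|^n * r^(A*n^2+B*n))) := by
  have hl : Real.log r < 0 := Real.log_neg h0 h1
  have hpi := Real.pi_pos
  have hA' : (0:ℝ) < A := by exact_mod_cast hA
  have hT : 0 < -(A:ℝ) * Real.log r / π := by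
    apply div_pos _ hpi
    nlinarith
  obtain ⟨L, hL⟩ : ∃ L, L = Real.log (|z|) := ⟨_, rfl⟩
  refine Summable.of_nonneg_of_le (fun n => by positivity) ?_
    (summable_pow_mul_jacobiTheta₂_term_bound
      ((|(B:ℝ) * Real.log r| + |L|) / (2*π)) hT k)
  intro n
  have hz' : 0 < |z| := abs_pos.mpr hz
  push_cast
  apply mul_le_mul_of_nonneg_left _ (by positivity)
  have e1 : |z|^n = Real.exp (n * L) := by
    rw [hL, ← Real.rpow_intCast, Real.rpow_def_of_pos hz']; ring_nf
  have e2 : r^(A*n^2+B*n) = Real.exp ((A*n^2+B*n) * Real.log r) := by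
    rw [← Real.rpow_intCast, Real.rpow_def_of_pos h0]; push_cast; ring_nf
  rw [e1, e2, ← Real.exp_add]
  apply Real.exp_le_exp.mpr
  have h3 : (n:ℝ) * L ≤ |L| * |(n:ℝ)| := by
    rw [← abs_mul, mul_comm]; exact le_abs_self _
  have h4 : (n:ℝ) * ((B:ℝ) * Real.log r) ≤ |(B:ℝ) * Real.log r| * |(n:ℝ)| := by
    rw [← abs_mul, mul_comm]; exact le_abs_self _
  have : -π * (-(A:ℝ) * Real.log r / π * n^2 - 2 * ((|(B:ℝ) * Real.log r| + |L|) / (2*π)) * |(n:ℝ)|)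
     = A * Real.log r * n^2 + (|(B:ℝ) * Real.log r| + |L|) * |(n:ℝ)| := by
    field_simp; ring
  rw [this]
  linarith

noncomputable def CC (q : ℝ) (n : ℕ) (m : ℤ) : ℝ := if 0 ≤ n + m then gb q (2*n) (n+m).toNat else 0

lemma CC_eq (q : ℝ) (n : ℕ) (m : ℤ) (a b : ℕ) (ha : (a:ℤ) = n + m) (hb : (b:ℤ) = n - m) :
    CC q n m * (pf q a * pf q b) = pf q (2*n) := by
  have hab : 2 * n = a + b := by omega
  unfold CC
  rw [if_pos (by omega), show ((n:ℤ)+m).toNat = a by omega, hab]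
  exact gb_mul q _ a b rfl

lemma pf_pos {q : ℝ} (h0 : 0 < q) (h1 : q < 1) (n : ℕ) : 0 < pf q n :=
  Finset.prod_pos (fun j _ => (fac_mem h0 h1 j).1)
lemma pf_le {q : ℝ} (h0 : 0 < q) (h1 : q < 1) (n : ℕ) : pf q n ≤ 1 :=
  Finset.prod_le_one (fun j _ => (fac_mem h0 h1 j).1.le) (fun j _ => (fac_mem h0 h1 j).2)
lemma pf_ge {q : ℝ} (h0 : 0 < q) (h1 : q < 1) (n : ℕ) : PQ q q ≤ pf q n := by
  have ha : Antitone (pf q) := by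
    apply antitone_nat_of_succ_le
    intro n
    rw [pf_succ]
    exact mul_le_of_le_one_right (pf_pos h0 h1 n).le (fac_mem h0 h1 n).2
  exact ha.le_of_tendsto (PQ_tendsto' h0 h1) n

lemma CC_bound {q : ℝ} (h0 : 0 < q) (h1 : q < 1) (n : ℕ) (m : ℤ) :
    |CC q n m| ≤ 1 / (PQ q q)^2 := by
  have hE := PQ_pos h0 h1 h0 h1
  by_cases h : 0 ≤ n + m
  · by_cases h' : 0 ≤ n - m
    · obtain ⟨a, ha⟩ := Int.eq_ofNat_of_zero_le h
      obtain ⟨b, hb⟩ := Int.eq_ofNat_of_zero_le h'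
      have := CC_eq q n m a b ha.symm hb.symm
      have p1 := pf_pos h0 h1 a
      have p2 := pf_pos h0 h1 b
      have : CC q n m = pf q (2*n) / (pf q a * pf q b) := by
        rw [← this]; field_simp
      rw [this, abs_of_pos (div_pos (pf_pos h0 h1 _) (mul_pos p1 p2))]
      apply div_le_div₀ zero_le_one (pf_le h0 h1 _) (by positivity)
      rw [sq]
      exact mul_le_mul (pf_ge h0 h1 a) (pf_ge h0 h1 b) hE.le p1.le
    · unfold CC
      rw [if_pos h, gb_gt q _ _ (by omega)]
      simp; positivity
  · unfold CC
    rw [if_neg h]; simp; positivity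

lemma CC_lim {q : ℝ} (h0 : 0 < q) (h1 : q < 1) (m : ℤ) :
    Tendsto (fun n => CC q n m) atTop (𝓝 (1 / PQ q q)) := by
  have hE := PQ_pos h0 h1 h0 h1
  have ht : Tendsto (pf q) atTop (𝓝 (PQ q q)) := PQ_tendsto' h0 h1
  have t1 : Tendsto (fun n : ℕ => ((n:ℤ)+m).toNat) atTop atTop := by
    apply tendsto_atTop.mpr
    intro b
    filter_upwards [eventually_ge_atTop (b + m.natAbs)] with n hn
    omega
  have t2 : Tendsto (fun n : ℕ => ((n:ℤ)-m).toNat) atTop atTop := by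
    apply tendsto_atTop.mpr
    intro b
    filter_upwards [eventually_ge_atTop (b + m.natAbs)] with n hn
    omega
  have t3 : Tendsto (fun n : ℕ => 2 * n) atTop atTop := tendsto_id.const_mul_atTop' two_pos
  have := (ht.comp t3).div ((ht.comp t1).mul (ht.comp t2)) (by positivity)
  rw [show PQ q q / (PQ q q * PQ q q) = 1 / PQ q q by field_simp] at this
  apply this.congr'
  filter_upwards [eventually_ge_atTop (m.natAbs)] with n hn
  have h := CC_eq q n m ((n:ℤ)+m).toNat ((n:ℤ)-m).toNat (by omega) (by omega)
  have p1 := pf_pos h0 h1 ((n:ℤ)+m).toNat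
  have p2 := pf_pos h0 h1 ((n:ℤ)-m).toNat
  simp only [Pi.div_apply, Function.comp]
  rw [← h]; field_simp

/-- Tannery -/
lemma tannery {q : ℝ} (h0 : 0 < q) (h1 : q < 1) (w : ℤ → ℝ) (hw : Summable (fun m => |w m|)) :
    Tendsto (fun n : ℕ => ∑ m ∈ Finset.Icc (-(n:ℤ)) n, w m * CC q n m) atTop
      (𝓝 ((∑' m, w m) / PQ q q)) := by
  have key : Tendsto (fun n : ℕ => ∑' m, w m * CC q n m) atTop (𝓝 (∑' m, w m * (1 / PQ q q))) := by
    apply tendsto_tsum_of_dominated_convergence (bound := fun m => |w m| * (1 / (PQ q q)^2))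
    · exact hw.mul_right _
    · intro m; exact (CC_lim h0 h1 m).const_mul _
    · apply Eventually.of_forall
      intro n m
      rw [Real.norm_eq_abs, abs_mul]
      exact mul_le_mul_of_nonneg_left (CC_bound h0 h1 n m) (abs_nonneg _)
  rw [tsum_mul_right, ← div_eq_mul_one_div] at key
  apply key.congr
  intro n
  apply tsum_eq_sum
  intro m hm
  simp only [Finset.mem_Icc, not_and_or, not_le] at hm
  have : CC q n m = 0 := by
    unfold CC
    split_ifs with h
    · apply gb_gt; omega
    · rfl
  rw [this, mul_zero]

lemma prod_inv_aux {q : ℝ} (h0 : 0 < q) {z : ℝ} (hz : z ≠ 0) {r : ℝ} (hr : 0 < r) (hq : q = r^2) (n : ℕ) :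
    ∏ j ∈ Finset.range n, (1 - z * q⁻¹^(j+1)) =
      (-z)^n * r⁻¹^(n*(n+1)) * ∏ j ∈ Finset.range n, (1 - z⁻¹ * q^(j+1)) := by
  induction n with
  | zero => simp
  | succ n ih =>
    rw [Finset.prod_range_succ, Finset.prod_range_succ, ih]
    have : r⁻¹^((n+1)*(n+1+1)) = r⁻¹^(n*(n+1)) * q⁻¹^(n+1) := by
      rw [hq, ← inv_pow, ← pow_mul, ← pow_add]; congr 1; ring
    rw [this]
    have : 1 - z * q⁻¹^(n+1) = -z * q⁻¹^(n+1) * (1 - z⁻¹ * q^(n+1)) := by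
      rw [inv_pow]; field_simp; ring
    rw [this]; ring

lemma finite_jtp {r : ℝ} (hr : 0 < r) {z : ℝ} (hz : z ≠ 0) (n : ℕ) :
    (∏ j ∈ Finset.range n, (1 - z * (r^2)^j)) * (∏ j ∈ Finset.range n, (1 - z⁻¹ * (r^2)^(j+1)))
     = ∑ m ∈ Finset.Icc (-(n:ℤ)) n, ((-z)^m * r^(m^2-m)) * CC (r^2) n m := by
  have h := cauchy_binom (r^2) (2*n) (-z * (r^2)⁻¹^n)
  rw [two_mul, Finset.prod_range_add] at h
  have e1 : ∏ j ∈ Finset.range n, (1 + -z * (r^2)⁻¹^n * (r^2)^(n+j)) = ∏ j ∈ Finset.range n, (1 - z * (r^2)^j) := by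
    apply Finset.prod_congr rfl
    intro j _
    rw [pow_add, inv_pow]; field_simp; ring
  have e2 : ∏ j ∈ Finset.range n, (1 + -z * (r^2)⁻¹^n * (r^2)^j) = ∏ j ∈ Finset.range n, (1 - z * (r^2)⁻¹^(j+1)) := by
    rw [← Finset.prod_range_reflect]
    apply Finset.prod_congr rfl
    intro j hj
    have hj' := Finset.mem_range.mp hj
    have : (r^2)⁻¹^n = (r^2)⁻¹^(j+1) * (r^2)⁻¹^(n-1-j) := by rw [← pow_add]; congr 1; omega
    rw [this, inv_pow _ (n-1-j)]; field_simp; ring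
  rw [e1, e2, prod_inv_aux (q := r^2) (by positivity) hz hr rfl] at h
  have hz' : -z ≠ 0 := neg_ne_zero.mpr hz
  have : (∏ j ∈ Finset.range n, (1 - z * (r^2)^j)) * (∏ j ∈ Finset.range n, (1 - z⁻¹ * (r^2)^(j+1)))
    = ((-z)^n * r⁻¹^(n*(n+1)))⁻¹ * ∑ k ∈ Finset.range (n+n+1), (r^2)^(k*(k-1)/2) * gb (r^2) (n+n) k * (-z * (r^2)⁻¹^n)^k := by
    rw [← h]; field_simp
  rw [this, Finset.mul_sum]
  apply Finset.sum_nbij' (fun k : ℕ => (k:ℤ) - n) (fun m : ℤ => (n + m).toNat)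
  · intro k hk; simp only [Finset.mem_range, Finset.mem_Icc] at *; omega
  · intro k hk; simp only [Finset.mem_range, Finset.mem_Icc] at *; omega
  · intro k hk; simp only [Finset.mem_range, Finset.mem_Icc] at *; omega
  · intro k hk; simp only [Finset.mem_range, Finset.mem_Icc] at *; omega
  · intro k hk
    have c : CC (r^2) n (k - n) = gb (r^2) (n+n) k := by
      unfold CC
      rw [if_pos (by omega), show ((n:ℤ) + (k-n)).toNat = k by omega, two_mul]
    rw [c]
    have e3 : (r^2)^(k*(k-1)/2) = r^((k:ℤ)*(k-1)) := by
      rw [← pow_mul, Nat.mul_div_cancel' (Nat.even_mul_pred_self k).two_dvd, ← zpow_natCast]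
      congr 1
      cases k with
      | zero => simp
      | succ k => push_cast; simp
    rw [e3, mul_pow, mul_inv, ← inv_pow r⁻¹, inv_inv, ← pow_mul, ← inv_pow r, ← pow_mul]
    rw [zpow_sub₀ hz', zpow_natCast, zpow_natCast]
    have e4 : r^(((k:ℤ)-n)^2-((k:ℤ)-n)) = r^(n*(n+1)) * r^((k:ℤ)*(k-1)) * r⁻¹^(2*(n*k)) := by
      rw [inv_pow, ← zpow_natCast r, ← zpow_natCast r, ← zpow_neg, ← zpow_add₀ hr.ne', ← zpow_add₀ hr.ne']
      congr 1; push_cast; ring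
    rw [e4]
    field_simp

lemma summ_w {r : ℝ} (h0 : 0 < r) (h1 : r < 1) {z : ℝ} (hz : z ≠ 0) :
    Summable (fun m : ℤ => |(-z)^m * r^(m^2-m)|) := by
  have := summ_aux h0 h1 hz 1 (-1) one_pos 0
  refine this.congr (fun m => ?_)
  rw [abs_mul, abs_zpow, abs_neg, abs_of_pos (zpow_pos h0 _), pow_zero, one_mul]
  congr 2; ring

/-- Jacobi triple product -/
lemma jtp {r : ℝ} (h0 : 0 < r) (h1 : r < 1) {z : ℝ} (hz : z ≠ 0) :
    ∑' m : ℤ, (-z)^m * r^(m^2-m) = PQ (r^2) z * PQ (r^2) (z⁻¹ * r^2) * PQ (r^2) (r^2) := by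
  have q0 : 0 < r^2 := by positivity
  have q1 : r^2 < 1 := pow_lt_one₀ h0.le h1 two_ne_zero
  have hE := PQ_pos q0 q1 q0 q1
  have t1 := tannery q0 q1 _ (summ_w h0 h1 hz)
  have t2 := (PQ_tendsto q0 q1 z).mul (PQ_tendsto q0 q1 (z⁻¹ * r^2))
  have := tendsto_nhds_unique t1 (t2.congr (fun n => ?_))
  · rw [← this]; field_simp
  · rw [← finite_jtp h0 hz]
    congr 1
    apply Finset.prod_congr rfl
    intro j _
    ring

lemma jacobi_cube {r : ℝ} (h0 : 0 < r) (h1 : r < 1) :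
    ∑' m : ℤ, (m:ℝ) * ((-1)^m * r^(m^2-m)) = - PQ (r^2) (r^2) ^ 3 := by
  have q0 : 0 < r^2 := by positivity
  have q1 : r^2 < 1 := pow_lt_one₀ h0.le h1 two_ne_zero
  have hE := PQ_pos q0 q1 q0 q1
  have hs : Summable (fun m : ℤ => |(m:ℝ) * ((-1)^m * r^(m^2-m))|) := by
    have := summ_aux h0 h1 (one_ne_zero) 1 (-1) one_pos 1
    refine this.congr (fun m => ?_)
    rw [abs_mul, abs_mul, abs_zpow, abs_neg, abs_of_pos (zpow_pos h0 _), pow_one]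
    congr 3; ring
  have t1 := (tannery q0 q1 _ hs).comp (tendsto_add_atTop_nat 1)
  have t2 := ((PQ_tendsto' q0 q1).mul ((PQ_tendsto' q0 q1).comp (tendsto_add_atTop_nat 1))).neg
  have := tendsto_nhds_unique t1 (t2.congr (fun n => ?_))
  · have e := (div_eq_iff hE.ne').mp this
    rw [e]; ring
  · simp only [Function.comp]
    have d1 : HasDerivAt (fun z : ℝ => ∑ m ∈ Finset.Icc (-((n+1:ℕ):ℤ)) ((n+1:ℕ):ℤ), ((-z)^m * r^(m^2-m)) * CC (r^2) (n+1) m)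
      (∑ m ∈ Finset.Icc (-((n+1:ℕ):ℤ)) ((n+1:ℕ):ℤ), (m * ((-1)^m * r^(m^2-m))) * CC (r^2) (n+1) m) 1 := by
      apply HasDerivAt.fun_sum
      intro m _
      apply HasDerivAt.mul_const
      rw [← mul_assoc]
      apply HasDerivAt.mul_const
      have := (hasDerivAt_zpow m (-1:ℝ) (Or.inl (by norm_num))).comp (1:ℝ) (hasDerivAt_neg (1:ℝ))
      refine this.congr_deriv ?_
      rw [zpow_sub_one₀ (by norm_num)]; norm_num
    have d2 : HasDerivAt (fun z : ℝ => (1 - z) * ((∏ j ∈ Finset.range n, (1 - z * (r^2)^(j+1))) * (∏ j ∈ Finset.range (n+1), (1 - z⁻¹ * (r^2)^(j+1)))))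
       (-((∏ j ∈ Finset.range n, (1 - (r^2)^(j+1))) * (∏ j ∈ Finset.range (n+1), (1 - (r^2)^(j+1))))) 1 := by
      have dg : DifferentiableAt ℝ (fun z : ℝ => ((∏ j ∈ Finset.range n, (1 - z * (r^2)^(j+1))) * (∏ j ∈ Finset.range (n+1), (1 - z⁻¹ * (r^2)^(j+1))))) 1 := by
        apply DifferentiableAt.mul
        · apply DifferentiableAt.fun_finsetProd
          intro i _
          fun_prop
        · apply DifferentiableAt.fun_finsetProd
          intro i _
          exact ((differentiableAt_inv (one_ne_zero)).mul_const _).const_sub _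
      have := ((hasDerivAt_id (1:ℝ)).const_sub 1).mul dg.hasDerivAt
      refine this.congr_deriv ?_
      simp
    refine (d2.congr_of_eventuallyEq ?_).unique d1
    filter_upwards [isOpen_ne.mem_nhds (one_ne_zero : (1:ℝ) ≠ 0)] with z hz
    rw [← finite_jtp h0 hz, Finset.prod_range_succ' _ n]
    simp only [pow_zero, mul_one]
    ring

set_option linter.unusedSimpArgs false
set_option linter.unusedVariables false

/-- sign -/
noncomputable def sg (n : ℤ) : ℝ := (-1:ℝ)^n
lemma sg_add (a b : ℤ) : sg (a+b) = sg a * sg b := zpow_add₀ (by norm_num) a b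
lemma sg_neg (a : ℤ) : sg (-a) = sg a := by
  unfold sg; rw [zpow_neg, ← inv_zpow]; norm_num
lemma sg_sub (a b : ℤ) : sg (a-b) = sg a * sg b := by rw [sub_eq_add_neg, sg_add, sg_neg]
lemma sg_one : sg 1 = -1 := by simp [sg]
lemma sg_zero : sg 0 = 1 := by simp [sg]
lemma sg_two : sg 2 = 1 := by rw [show (2:ℤ) = 1 + 1 by norm_num, sg_add, sg_one]; norm_num
lemma sg_two_mul (a : ℤ) : sg (2*a) = 1 := by
  unfold sg; rw [zpow_mul]; norm_num
lemma sg_sq (a : ℤ) : sg a * sg a = 1 := by rw [← sg_add, ← two_mul, sg_two_mul]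
lemma sg_abs (a : ℤ) : |sg a| = 1 := by unfold sg; rw [abs_zpow]; norm_num

lemma zp {r : ℝ} (hr : 0 < r) {a b k c d : ℤ} (h : a + b = k + (c + d)) :
    r^a * r^b = r^k * (r^c * r^d) := by
  rw [← zpow_add₀ hr.ne', ← zpow_add₀ hr.ne', ← zpow_add₀ hr.ne', h]

lemma zp0 {r : ℝ} (hr : 0 < r) {a b c d : ℤ} (h : a + b = c + d) :
    r^a * r^b = r^c * r^d := by
  rw [← zpow_add₀ hr.ne', ← zpow_add₀ hr.ne', h]

lemma hsx {F G : ℤ × ℤ → ℝ} {v : ℝ} (h : HasSum G v) (e : ∀ p, F p = G p) : HasSum F v :=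
  (funext e : F = G) ▸ h

def eqv5 : Fin 5 × (ℤ × ℤ) ≃ ℤ × ℤ where
  toFun x := (x.2.1 - 2 * x.2.2 + ((x.1 : ℕ) - 2 : ℤ), 2 * x.2.1 + x.2.2)
  invFun p := (⟨((p.1 + 2 * p.2 + 2) % 5).toNat, by omega⟩,
    ((p.1 - ((p.1 + 2 * p.2 + 2) % 5 - 2) + 2 * p.2) / 5, (p.2 - 2 * (p.1 - ((p.1 + 2 * p.2 + 2) % 5 - 2))) / 5))
  left_inv := by
    rintro ⟨⟨c, hc⟩, s, t⟩
    simp only [Prod.mk.injEq, Fin.mk.injEq]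
    refine ⟨by omega, by omega, by omega⟩
  right_inv := by
    rintro ⟨i, j⟩
    simp only [Prod.mk.injEq]
    constructor <;> omega

def eqv2 : Fin 2 × (ℤ × ℤ) ≃ ℤ × ℤ where
  toFun x := (x.2.1 + x.2.2 + ((x.1 : ℕ) : ℤ), x.2.1 - x.2.2)
  invFun p := (⟨((p.1 + p.2) % 2).toNat, by omega⟩,
    ((p.1 + p.2) / 2, (p.1 - p.2)/2))
  left_inv := by
    rintro ⟨⟨c, hc⟩, s, t⟩
    simp only [Prod.mk.injEq, Fin.mk.injEq]
    refine ⟨by omega, by omega, by omega⟩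
  right_inv := by
    rintro ⟨i, j⟩
    simp only [Prod.mk.injEq]
    constructor <;> omega

lemma split5 {F : ℤ × ℤ → ℝ} (hF : Summable F) {v0 v1 v2 v3 v4 : ℝ}
    (h0 : HasSum (fun p : ℤ × ℤ => F (p.1 - 2*p.2 + (-2), 2*p.1+p.2)) v0)
    (h1 : HasSum (fun p : ℤ × ℤ => F (p.1 - 2*p.2 + (-1), 2*p.1+p.2)) v1)
    (h2 : HasSum (fun p : ℤ × ℤ => F (p.1 - 2*p.2 + 0, 2*p.1+p.2)) v2)
    (h3 : HasSum (fun p : ℤ × ℤ => F (p.1 - 2*p.2 + 1, 2*p.1+p.2)) v3)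
    (h4 : HasSum (fun p : ℤ × ℤ => F (p.1 - 2*p.2 + 2, 2*p.1+p.2)) v4) :
    ∑' p, F p = v0 + v1 + v2 + v3 + v4 := by
  rw [← eqv5.tsum_eq F]
  have hs : Summable (fun x => F (eqv5 x)) := (eqv5.summable_iff (f := F)).mpr hF
  rw [hs.tsum_prod, tsum_fintype, Fin.sum_univ_five, ← h0.tsum_eq, ← h1.tsum_eq, ← h2.tsum_eq,
    ← h3.tsum_eq, ← h4.tsum_eq]
  rfl

lemma split2 {F : ℤ × ℤ → ℝ} (hF : Summable F) {v0 v1 : ℝ}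
    (h0 : HasSum (fun p : ℤ × ℤ => F (p.1 + p.2 + 0, p.1-p.2)) v0)
    (h1 : HasSum (fun p : ℤ × ℤ => F (p.1 + p.2 + 1, p.1-p.2)) v1) :
    ∑' p, F p = v0 + v1 := by
  rw [← eqv2.tsum_eq F]
  have hs : Summable (fun x => F (eqv2 x)) := (eqv2.summable_iff (f := F)).mpr hF
  rw [hs.tsum_prod, tsum_fintype, Fin.sum_univ_two, ← h0.tsum_eq, ← h1.tsum_eq]
  rfl

def shp (k : ℤ) : ℤ ≃ ℤ := Equiv.addRight k
def shm (k : ℤ) : ℤ ≃ ℤ := (Equiv.addRight k).trans (Equiv.neg ℤ)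

lemma shp_ap (k n : ℤ) : shp k n = n + k := rfl
lemma shm_ap (k n : ℤ) : shm k n = -(n + k) := rfl

lemma hsprod {f g : ℤ → ℝ} (hf : Summable (fun n => ‖f n‖)) (hg : Summable (fun n => ‖g n‖)) :
    HasSum (fun p : ℤ × ℤ => f p.1 * g p.2) ((∑' n, f n) * ∑' n, g n) := by
  rw [tsum_mul_tsum_of_summable_norm hf hg]
  exact (summable_mul_of_summable_norm hf hg).hasSum

lemma hsprod' {f g : ℤ → ℝ} (hf : Summable (fun n => ‖f n‖)) (hg : Summable (fun n => ‖g n‖))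
    (e1 e2 : ℤ ≃ ℤ) :
    HasSum (fun p : ℤ × ℤ => f (e1 p.1) * g (e2 p.2)) ((∑' n, f n) * ∑' n, g n) := by
  rw [← e1.tsum_eq f, ← e2.tsum_eq g]
  exact hsprod ((e1.summable_iff (f := fun n => ‖f n‖)).mpr hf) ((e2.summable_iff (f := fun n => ‖g n‖)).mpr hg)

/-- unsigned and signed theta terms -/
noncomputable def tp (r : ℝ) (A B n : ℤ) : ℝ := r^(A*n^2+B*n)
noncomputable def tq (r : ℝ) (A B n : ℤ) : ℝ := sg n * r^(A*n^2+B*n)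
noncomputable def Tp (r : ℝ) (A B : ℤ) : ℝ := ∑' n, tp r A B n
noncomputable def Tq (r : ℝ) (A B : ℤ) : ℝ := ∑' n, tq r A B n

section
variable {r : ℝ} (h0 : 0 < r) (h1 : r < 1)
include h0 h1

lemma tp_s (A B : ℤ) (hA : 0 < A) : Summable (fun n => ‖tp r A B n‖) := by
  have := summ_aux h0 h1 one_ne_zero A B hA 0
  refine this.congr (fun n => ?_)
  rw [tp, Real.norm_eq_abs, abs_of_pos (zpow_pos h0 _)]
  simp
lemma tq_k (A B : ℤ) (hA : 0 < A) (k : ℕ) : Summable (fun n : ℤ => ‖(n:ℝ)^k * tq r A B n‖) := by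
  have := summ_aux h0 h1 one_ne_zero A B hA k
  refine this.congr (fun n => ?_)
  rw [tq, Real.norm_eq_abs, abs_mul, abs_mul, abs_of_pos (zpow_pos h0 _), sg_abs, abs_pow]
  simp
lemma tq_s (A B : ℤ) (hA : 0 < A) : Summable (fun n => ‖tq r A B n‖) := by
  simpa using tq_k h0 h1 A B hA 0

lemma idA : Tp r 1 1 ^ 2 = r^2 * Tp r 5 5 ^ 2 + 4 * (Tp r 5 3 * Tp r 5 1) := by
  have s := tp_s h0 h1
  have hP := hsprod (s 1 1 (by norm_num)) (s 1 1 (by norm_num))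
  have N := s 5 3 (by norm_num)
  have M := s 5 1 (by norm_num)
  have W := s 5 5 (by norm_num)
  have key := split5 hP.summable (v0 := Tp r 5 1 * Tp r 5 3) (v1 := Tp r 5 1 * Tp r 5 3)
    (v2 := Tp r 5 3 * Tp r 5 1) (v3 := r^(2:ℤ) * (Tp r 5 5 * Tp r 5 5)) (v4 := Tp r 5 3 * Tp r 5 1) ?_ ?_ ?_ ?_ ?_
  · rw [hP.tsum_eq] at key
    change Tp r 1 1 * Tp r 1 1 = _ at key
    rw [show r^(2:ℤ) = r^2 from zpow_natCast r 2] at key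
    linear_combination key
  · refine hsx (hsprod' M N (shm 0) (shm 1)) (fun p => ?_)
    simp only [tp, shm_ap, shp_ap]
    exact zp0 h0 (by ring)
  · refine hsx (hsprod' M N (shp 0) (shp 0)) (fun p => ?_)
    simp only [tp, shm_ap, shp_ap]
    exact zp0 h0 (by ring)
  · refine hsx (hsprod' N M (shp 0) (shm 0)) (fun p => ?_)
    simp only [tp, shm_ap, shp_ap]
    exact zp0 h0 (by ring)
  · refine hsx ((hsprod' W W (shp 0) (shm 0)).mul_left (r^(2:ℤ))) (fun p => ?_)
    simp only [tp, shm_ap, shp_ap]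
    exact zp h0 (by ring)
  · refine hsx (hsprod' N M (shm 1) (shp (-1))) (fun p => ?_)
    simp only [tp, shm_ap, shp_ap]
    exact zp0 h0 (by ring)

lemma idB : Tq r 2 0 ^ 2 = Tq r 10 0 ^ 2 - 4 * r^2 * (Tq r 10 8 * Tq r 10 4) := by
  have s := tq_s h0 h1
  have hP := hsprod (s 2 0 (by norm_num)) (s 2 0 (by norm_num))
  have T1 := s 10 8 (by norm_num)
  have T3 := s 10 4 (by norm_num)
  have W := s 10 0 (by norm_num)
  have key := split5 hP.summable (v0 := (-r^(2:ℤ)) * (Tq r 10 8 * Tq r 10 4)) (v1 := (-r^(2:ℤ)) * (Tq r 10 4 * Tq r 10 8))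
    (v2 := Tq r 10 0 * Tq r 10 0) (v3 := (-r^(2:ℤ)) * (Tq r 10 4 * Tq r 10 8)) (v4 := (-r^(2:ℤ)) * (Tq r 10 8 * Tq r 10 4)) ?_ ?_ ?_ ?_ ?_
  · rw [hP.tsum_eq] at key
    change Tq r 2 0 * Tq r 2 0 = _ at key
    rw [show r^(2:ℤ) = r^2 from zpow_natCast r 2] at key
    linear_combination key
  · refine hsx ((hsprod' T1 T3 (shm 0) (shm 1)).mul_left (-r^(2:ℤ))) (fun p => ?_)
    simp only [tq, shm_ap, shp_ap, sg_add, sg_neg, sg_sub, sg_two_mul, sg_two, sg_one, sg_zero]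
    linear_combination (sg p.1 * sg p.2) * zp h0 (a := 2 * (p.1-2*p.2+(-2))^2+0*(p.1-2*p.2+(-2))) (b := 2 * (2*p.1+p.2)^2+0*(2*p.1+p.2))
      (k := 2) (c := 10 * (-(p.1+0))^2+8*(-(p.1+0))) (d := 10 * (-(p.2+1))^2+4*(-(p.2+1))) (by ring)
  · refine hsx ((hsprod' T3 T1 (shm 0) (shp 0)).mul_left (-r^(2:ℤ))) (fun p => ?_)
    simp only [tq, shm_ap, shp_ap, sg_add, sg_neg, sg_sub, sg_two_mul, sg_two, sg_one, sg_zero]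
    linear_combination (-sg p.1 * sg p.2) * zp h0 (a := 2 * (p.1-2*p.2+(-1))^2+0*(p.1-2*p.2+(-1))) (b := 2 * (2*p.1+p.2)^2+0*(2*p.1+p.2))
      (k := 2) (c := 10 * (-(p.1+0))^2+4*(-(p.1+0))) (d := 10 * (p.2+0)^2+8*(p.2+0)) (by ring)
  · refine hsx ((hsprod' W W (shp 0) (shp 0))) (fun p => ?_)
    simp only [tq, shm_ap, shp_ap, sg_add, sg_neg, sg_sub, sg_two_mul, sg_two, sg_one, sg_zero]
    have := zp0 h0 (a := 2 * (p.1-2*p.2+0)^2+0*(p.1-2*p.2+0)) (b := 2 * (2*p.1+p.2)^2+0*(2*p.1+p.2))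
       (c := 10 * (p.1+0)^2+0*(p.1+0)) (d := 10 * (p.2+0)^2+0*(p.2+0)) (by ring)
    linear_combination (sg p.1 * sg p.2) * this
  · refine hsx ((hsprod' T3 T1 (shp 0) (shm 0)).mul_left (-r^(2:ℤ))) (fun p => ?_)
    simp only [tq, shm_ap, shp_ap, sg_add, sg_neg, sg_sub, sg_two_mul, sg_two, sg_one, sg_zero]
    linear_combination (-sg p.1 * sg p.2) * zp h0 (a := 2 * (p.1-2*p.2+1)^2+0*(p.1-2*p.2+1)) (b := 2 * (2*p.1+p.2)^2+0*(2*p.1+p.2))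
      (k := 2) (c := 10 * (p.1+0)^2+4*(p.1+0)) (d := 10 * (-(p.2+0))^2+8*(-(p.2+0))) (by ring)
  · refine hsx ((hsprod' T1 T3 (shp 0) (shp (-1))).mul_left (-r^(2:ℤ))) (fun p => ?_)
    simp only [tq, shm_ap, shp_ap, sg_add, sg_neg, sg_sub, sg_two_mul, sg_two, sg_one, sg_zero]
    linear_combination (sg p.1 * sg p.2) * zp h0 (a := 2 * (p.1-2*p.2+2)^2+0*(p.1-2*p.2+2)) (b := 2 * (2*p.1+p.2)^2+0*(2*p.1+p.2))
      (k := 2) (c := 10 * (p.1+0)^2+8*(p.1+0)) (d := 10 * (p.2+(-1))^2+4*(p.2+(-1))) (by ring)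

lemma idC1 : Tq r 5 3 * Tp r 5 1 = Tq r 10 4 * Tq r 10 2 - r^2 * (Tq r 10 6 * Tq r 10 8) := by
  have s := tq_s h0 h1
  have hP := hsprod (s 5 3 (by norm_num)) (tp_s h0 h1 5 1 (by norm_num))
  have key := split2 hP.summable (v0 := Tq r 10 4 * Tq r 10 2) (v1 := (-r^(2:ℤ)) * (Tq r 10 6 * Tq r 10 8)) ?_ ?_
  · rw [hP.tsum_eq] at key
    change Tq r 5 3 * Tp r 5 1 = _ at key
    rw [show r^(2:ℤ) = r^2 from zpow_natCast r 2] at key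
    linear_combination key
  · refine hsx (hsprod' (s 10 4 (by norm_num)) (s 10 2 (by norm_num)) (shp 0) (shp 0)) (fun p => ?_)
    simp only [tp, tq, shm_ap, shp_ap, sg_add, sg_neg, sg_sub, sg_two_mul, sg_two, sg_one, sg_zero]
    have := zp0 h0 (a := 5 * (p.1+p.2+0)^2+3*(p.1+p.2+0)) (b := 5 * (p.1-p.2)^2+1*(p.1-p.2))
       (c := 10 * (p.1+0)^2+4*(p.1+0)) (d := 10 * (p.2+0)^2+2*(p.2+0)) (by ring)
    linear_combination (sg p.1 * sg p.2) * this
  · refine hsx ((hsprod' (s 10 6 (by norm_num)) (s 10 8 (by norm_num)) (shm 1) (shm 1)).mul_left (-r^(2:ℤ))) (fun p => ?_)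
    simp only [tp, tq, shm_ap, shp_ap, sg_add, sg_neg, sg_sub, sg_two_mul, sg_two, sg_one, sg_zero]
    have := zp h0 (a := 5 * (p.1+p.2+1)^2+3*(p.1+p.2+1)) (b := 5 * (p.1-p.2)^2+1*(p.1-p.2))
      (k := 2) (c := 10 * (-(p.1+1))^2+6*(-(p.1+1))) (d := 10 * (-(p.2+1))^2+8*(-(p.2+1))) (by ring)
    linear_combination (-sg p.1 * sg p.2) * this

lemma idC2 : Tp r 5 3 * Tq r 5 1 = Tq r 10 4 * Tq r 10 2 + r^2 * (Tq r 10 6 * Tq r 10 8) := by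
  have s := tq_s h0 h1
  have hP := hsprod (tp_s h0 h1 5 3 (by norm_num)) (s 5 1 (by norm_num))
  have key := split2 hP.summable (v0 := Tq r 10 4 * Tq r 10 2) (v1 := (r^(2:ℤ)) * (Tq r 10 6 * Tq r 10 8)) ?_ ?_
  · rw [hP.tsum_eq] at key
    change Tp r 5 3 * Tq r 5 1 = _ at key
    rw [show r^(2:ℤ) = r^2 from zpow_natCast r 2] at key
    linear_combination key
  · refine hsx (hsprod' (s 10 4 (by norm_num)) (s 10 2 (by norm_num)) (shp 0) (shp 0)) (fun p => ?_)
    simp only [tp, tq, shm_ap, shp_ap, sg_add, sg_neg, sg_sub, sg_two_mul, sg_two, sg_one, sg_zero]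
    have := zp0 h0 (a := 5 * (p.1+p.2+0)^2+3*(p.1+p.2+0)) (b := 5 * (p.1-p.2)^2+1*(p.1-p.2))
       (c := 10 * (p.1+0)^2+4*(p.1+0)) (d := 10 * (p.2+0)^2+2*(p.2+0)) (by ring)
    linear_combination (sg p.1 * sg p.2) * this
  · refine hsx ((hsprod' (s 10 6 (by norm_num)) (s 10 8 (by norm_num)) (shm 1) (shm 1)).mul_left (r^(2:ℤ))) (fun p => ?_)
    simp only [tp, tq, shm_ap, shp_ap, sg_add, sg_neg, sg_sub, sg_two_mul, sg_two, sg_one, sg_zero]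
    have := zp h0 (a := 5 * (p.1+p.2+1)^2+3*(p.1+p.2+1)) (b := 5 * (p.1-p.2)^2+1*(p.1-p.2))
      (k := 2) (c := 10 * (-(p.1+1))^2+6*(-(p.1+1))) (d := 10 * (-(p.2+1))^2+8*(-(p.2+1))) (by ring)
    linear_combination (sg p.1 * sg p.2) * this

end


noncomputable def tw (r : ℝ) (A B : ℤ) (α β γ : ℝ) (n : ℤ) : ℝ := (α * (n:ℝ)^2 + β * n + γ) * tq r A B n
noncomputable def Tw (r : ℝ) (A B : ℤ) (α β γ : ℝ) : ℝ := ∑' n, tw r A B α β γ n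

section
variable {r : ℝ} (h0 : 0 < r) (h1 : r < 1)
include h0 h1

lemma tw_hs (A B : ℤ) (hA : 0 < A) (α β γ : ℝ) : HasSum (tw r A B α β γ)
    (α * (∑' n : ℤ, (n:ℝ)^2 * tq r A B n) + β * (∑' n : ℤ, (n:ℝ) * tq r A B n) + γ * Tq r A B) := by
  have a := ((tq_k h0 h1 A B hA 2).of_norm.hasSum.mul_left α)
  have b := ((tq_k h0 h1 A B hA 1).of_norm.hasSum.mul_left β)
  have c := ((tq_k h0 h1 A B hA 0).of_norm.hasSum.mul_left γ)
  simp only [pow_one, pow_zero, one_mul] at b c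
  refine ((a.add b).add c).congr_fun ?_ |> fun h => h
  intro n
  simp only [tw]; ring

lemma tw_s (A B : ℤ) (hA : 0 < A) (α β γ : ℝ) : Summable (fun n => ‖tw r A B α β γ n‖) :=
  (tw_hs h0 h1 A B hA α β γ).summable.norm

lemma Tq_zero (A : ℤ) : Tq r A A = 0 := by
  have h : Tq r A A = - Tq r A A := by
    conv_lhs => rw [Tq, ← (shm 1).tsum_eq]
    rw [Tq, ← tsum_neg]
    congr 1; funext n
    simp only [tq, shm_ap, sg_neg, sg_add, sg_one]
    rw [show A * (-(n+1))^2 + A * (-(n+1)) = A*n^2+A*n by ring]; ring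
  linarith

lemma U_eq : Tw r 1 1 0 2 1 = 2 * PQ (r^2) (r^2)^3 := by
  have hZ := Tq_zero h0 h1 1
  have a := tw_hs h0 h1 1 1 one_pos 0 2 1
  have b := tw_hs h0 h1 1 1 one_pos 0 1 1
  have c := jacobi_cube h0 h1
  have e : ∑' m:ℤ, (m:ℝ)*((-1)^m * r^(m^2-m)) = - Tw r 1 1 0 1 1 := by
    rw [← (shp 1).tsum_eq, Tw, ← tsum_neg]
    congr 1; funext n
    simp only [tw, tq, shp_ap]
    have := sg_add n 1
    rw [sg_one] at this
    change ((n+1:ℤ):ℝ) * (sg (n+1) * _) = _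
    rw [this, show (n+1)^2-(n+1) = 1 * n^2+1*n by ring]; push_cast; ring
  have a' : Tw r 1 1 0 2 1 = _ := a.tsum_eq
  have b' : Tw r 1 1 0 1 1 = _ := b.tsum_eq
  rw [hZ] at a' b'
  linarith

lemma idD0 : Tw r 5 3 100 60 9 * Tq r 5 1 - Tq r 5 3 * Tw r 5 1 100 20 1 = 8 * PQ (r^2) (r^2)^6 := by
  have s := tq_s h0 h1
  have w := tw_s h0 h1
  have N := s 5 3 (by norm_num)
  have M := s 5 1 (by norm_num)
  have W := s 5 5 (by norm_num)
  have Nw := w 5 3 (by norm_num) 100 60 9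
  have Mw := w 5 1 (by norm_num) 100 20 1
  have Ww := w 5 5 (by norm_num) 100 100 25
  have f0 := s 1 1 (by norm_num)
  have f1 := w 1 1 (by norm_num) 0 2 1
  have f2 := w 1 1 (by norm_num) 4 4 1
  have hP := (((hsprod f1 f1).mul_left 8).sub ((hsprod f2 f0).mul_left 3)).add ((hsprod f0 f2).mul_left 3)
  have key := split5 hP.summable
    (v0 := (-1) * (Tw r 5 1 100 20 1 * Tq r 5 3 - Tq r 5 1 * Tw r 5 3 100 60 9))
    (v1 := (-1) * (Tw r 5 1 100 20 1 * Tq r 5 3 - Tq r 5 1 * Tw r 5 3 100 60 9))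
    (v2 := 1 * (Tw r 5 3 100 60 9 * Tq r 5 1 - Tq r 5 3 * Tw r 5 1 100 20 1))
    (v3 := (-r^(2:ℤ)) * (Tw r 5 5 100 100 25 * Tq r 5 5 - Tq r 5 5 * Tw r 5 5 100 100 25))
    (v4 := 1 * (Tw r 5 3 100 60 9 * Tq r 5 1 - Tq r 5 3 * Tw r 5 1 100 20 1)) ?_ ?_ ?_ ?_ ?_
  · rw [hP.tsum_eq] at key
    change 8 * (Tw r 1 1 0 2 1 * Tw r 1 1 0 2 1) - 3 * (Tw r 1 1 4 4 1 * Tq r 1 1) + 3 * (Tq r 1 1 * Tw r 1 1 4 4 1) = _ at key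
    rw [U_eq h0 h1, Tq_zero h0 h1, Tq_zero h0 h1] at key
    linear_combination -key/4
  · refine hsx (((hsprod' Mw N (shm 0) (shm 1)).sub (hsprod' M Nw (shm 0) (shm 1))).mul_left (-1)) (fun p => ?_)
    simp only [tw, tq, shm_ap, shp_ap, sg_add, sg_neg, sg_sub, sg_two_mul, sg_two, sg_one, sg_zero]
    have := zp0 h0 (a := 1 * (p.1-2*p.2+(-2))^2+1*(p.1-2*p.2+(-2))) (b := 1 * (2*p.1+p.2)^2+1*(2*p.1+p.2))
      (c := 5 * (-(p.1+0))^2+1*(-(p.1+0))) (d := 5 * (-(p.2+1))^2+3*(-(p.2+1))) (by ring)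
    push_cast
    linear_combination (sg p.1 * sg p.2 * ((10*p.1-1)^2 - (10*p.2+7)^2)) * this
  · refine hsx (((hsprod' Mw N (shp 0) (shp 0)).sub (hsprod' M Nw (shp 0) (shp 0))).mul_left (-1)) (fun p => ?_)
    simp only [tw, tq, shm_ap, shp_ap, sg_add, sg_neg, sg_sub, sg_two_mul, sg_two, sg_one, sg_zero]
    have := zp0 h0 (a := 1 * (p.1-2*p.2+(-1))^2+1*(p.1-2*p.2+(-1))) (b := 1 * (2*p.1+p.2)^2+1*(2*p.1+p.2))
      (c := 5 * (p.1+0)^2+1*(p.1+0)) (d := 5 * (p.2+0)^2+3*(p.2+0)) (by ring)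
    push_cast
    linear_combination (-sg p.1 * sg p.2 * ((10*p.1+1)^2 - (10*p.2+3)^2)) * this
  · refine hsx (((hsprod' Nw M (shp 0) (shm 0)).sub (hsprod' N Mw (shp 0) (shm 0))).mul_left 1) (fun p => ?_)
    simp only [tw, tq, shm_ap, shp_ap, sg_add, sg_neg, sg_sub, sg_two_mul, sg_two, sg_one, sg_zero]
    have := zp0 h0 (a := 1 * (p.1-2*p.2+0)^2+1*(p.1-2*p.2+0)) (b := 1 * (2*p.1+p.2)^2+1*(2*p.1+p.2))
      (c := 5 * (p.1+0)^2+3*(p.1+0)) (d := 5 * (-(p.2+0))^2+1*(-(p.2+0))) (by ring)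
    push_cast
    linear_combination (sg p.1 * sg p.2 * ((10*p.1+3)^2 - (10*p.2-1)^2)) * this
  · refine hsx (((hsprod' Ww W (shp 0) (shm 0)).sub (hsprod' W Ww (shp 0) (shm 0))).mul_left (-r^(2:ℤ))) (fun p => ?_)
    simp only [tw, tq, shm_ap, shp_ap, sg_add, sg_neg, sg_sub, sg_two_mul, sg_two, sg_one, sg_zero]
    have := zp h0 (a := 1 * (p.1-2*p.2+1)^2+1*(p.1-2*p.2+1)) (b := 1 * (2*p.1+p.2)^2+1*(2*p.1+p.2)) (k := 2)
      (c := 5 * (p.1+0)^2+5*(p.1+0)) (d := 5 * (-(p.2+0))^2+5*(-(p.2+0))) (by ring)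
    push_cast
    linear_combination (-sg p.1 * sg p.2 * ((10*p.1+5)^2 - (10*p.2-5)^2)) * this
  · refine hsx (((hsprod' Nw M (shm 1) (shp (-1))).sub (hsprod' N Mw (shm 1) (shp (-1)))).mul_left 1) (fun p => ?_)
    simp only [tw, tq, shm_ap, shp_ap, sg_add, sg_neg, sg_sub, sg_two_mul, sg_two, sg_one, sg_zero]
    have := zp0 h0 (a := 1 * (p.1-2*p.2+2)^2+1*(p.1-2*p.2+2)) (b := 1 * (2*p.1+p.2)^2+1*(2*p.1+p.2))
      (c := 5 * (-(p.1+1))^2+3*(-(p.1+1))) (d := 5 * (p.2+(-1))^2+1*(p.2+(-1))) (by ring)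
    push_cast
    linear_combination (sg p.1 * sg p.2 * ((10*p.1+7)^2 - (10*p.2-9)^2)) * this

lemma idD : Tq r 5 3 * Tq r 5 1 + 5/2 * (Tw r 5 3 5 3 0 * Tq r 5 1 - Tq r 5 3 * Tw r 5 1 5 1 0) = PQ (r^2) (r^2)^6 := by
  have h := idD0 h0 h1
  have a1 : Tw r 5 3 100 60 9 = _ := (tw_hs h0 h1 5 3 (by norm_num) 100 60 9).tsum_eq
  have a2 : Tw r 5 3 5 3 0 = _ := (tw_hs h0 h1 5 3 (by norm_num) 5 3 0).tsum_eq
  have b1 : Tw r 5 1 100 20 1 = _ := (tw_hs h0 h1 5 1 (by norm_num) 100 20 1).tsum_eq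
  have b2 : Tw r 5 1 5 1 0 = _ := (tw_hs h0 h1 5 1 (by norm_num) 5 1 0).tsum_eq
  rw [a1, b1] at h
  rw [a2, b2]
  linear_combination h/8
end


section
variable {r : ℝ} (h0 : 0 < r) (h1 : r < 1)
include h0 h1

lemma Tq_prod (A B C : ℕ) (hA : 0 < A) (h : B + C = A) :
    Tq r A B = PQ (r^(2*A)) (r^(A+B)) * PQ (r^(2*A)) (r^C) * PQ (r^(2*A)) (r^(2*A)) := by
  have hz : r^(A+B) ≠ 0 := (pow_pos h0 _).ne'
  have := jtp (r := r^A) (z := r^(A+B)) (pow_pos h0 _) (pow_lt_one₀ h0.le h1 hA.ne') hz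
  rw [show (r^A)^2 = r^(2*A) by ring,
    show (r^(A+B))⁻¹ * r^(2*A) = r^C by
      rw [inv_mul_eq_iff_eq_mul₀ hz, ← pow_add]; congr 1; omega] at this
  rw [← this, Tq]
  congr 1; funext n
  rw [tq, sg, show -r^(A+B) = -1 * r^(A+B) by ring, mul_zpow, mul_assoc]
  congr 1
  rw [← zpow_natCast, ← zpow_natCast, ← zpow_mul, ← zpow_mul, ← zpow_add₀ h0.ne']
  congr 1; push_cast; ring

lemma Tp_prod (A B C : ℕ) (hA : 0 < A) (h : B + C = A) :
    Tp r A B = PQ (r^(2*A)) (-r^(A+B)) * PQ (r^(2*A)) (-r^C) * PQ (r^(2*A)) (r^(2*A)) := by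
  have hz : r^(A+B) ≠ 0 := (pow_pos h0 _).ne'
  have hz' : -r^(A+B) ≠ 0 := neg_ne_zero.mpr hz
  have := jtp (r := r^A) (z := -r^(A+B)) (pow_pos h0 _) (pow_lt_one₀ h0.le h1 hA.ne') hz'
  rw [show (r^A)^2 = r^(2*A) by ring,
    show (-r^(A+B))⁻¹ * r^(2*A) = -r^C by
      rw [inv_mul_eq_iff_eq_mul₀ hz', neg_mul_neg, ← pow_add]; congr 1; omega] at this
  rw [← this, Tp]
  congr 1; funext n
  rw [tp, neg_neg]
  rw [← zpow_natCast, ← zpow_natCast, ← zpow_mul, ← zpow_mul, ← zpow_add₀ h0.ne']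
  congr 1; push_cast; ring

lemma penta : Tq r 3 1 = PQ (r^2) (r^2) := by
  rw [PQ_split (pow_pos h0 2) (pow_lt_one₀ h0.le h1 two_ne_zero) _ 3 (by norm_num)]
  have := Tq_prod h0 h1 3 1 2 (by norm_num) (by norm_num)
  simp only [Nat.cast_ofNat, Nat.cast_one] at this
  rw [this]
  simp only [Finset.prod_range_succ, Finset.prod_range_zero]
  ring_nf

end

noncomputable def xx (r : ℝ) (i : ℕ) : ℝ := PQ (r^20) (r^(2*i))

section
variable {r : ℝ} (h0 : 0 < r) (h1 : r < 1)
include h0 h1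

lemma xx_pos (i : ℕ) (hi : 0 < i) : 0 < xx r i :=
  PQ_pos (pow_pos h0 _) (pow_lt_one₀ h0.le h1 (by norm_num)) (pow_pos h0 _) (pow_lt_one₀ h0.le h1 (by omega))

lemma sp5 (i : ℕ) : PQ (r^10) (r^(2*i)) = xx r i * xx r (i+5) := by
  rw [PQ_split (pow_pos h0 10) (pow_lt_one₀ h0.le h1 (by norm_num)) _ 2 (by norm_num)]
  simp only [Finset.prod_range_succ, Finset.prod_range_zero, xx]
  ring_nf
lemma sp2 (i : ℕ) : PQ (r^4) (r^(2*i)) = xx r i * xx r (i+2) * xx r (i+4) * xx r (i+6) * xx r (i+8) := by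
  rw [PQ_split (pow_pos h0 4) (pow_lt_one₀ h0.le h1 (by norm_num)) _ 5 (by norm_num)]
  simp only [Finset.prod_range_succ, Finset.prod_range_zero, xx]
  ring_nf
lemma sp1 : PQ (r^2) (r^2) = (xx r 1 * xx r 9) * (xx r 3 * xx r 7) * ((xx r 2 * xx r 8) * (xx r 4 * xx r 6)) * xx r 5 * xx r 10 := by
  rw [PQ_split (pow_pos h0 2) (pow_lt_one₀ h0.le h1 (by norm_num)) _ 10 (by norm_num)]
  simp only [Finset.prod_range_succ, Finset.prod_range_zero, xx]
  ring_nf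

lemma vE2 : PQ (r^4) (r^4) = (xx r 2 * xx r 8) * (xx r 4 * xx r 6) * xx r 10 := by
  rw [show PQ (r^4) (r^4) = PQ (r^4) (r^(2*2)) by norm_num, sp2 h0 h1]; ring
lemma vE5 : PQ (r^10) (r^10) = xx r 5 * xx r 10 := by
  rw [show PQ (r^10) (r^10) = PQ (r^10) (r^(2*5)) by norm_num, sp5 h0 h1]
lemma vE10 : PQ (r^20) (r^20) = xx r 10 := by simp [xx]

lemma vN : Tq r 5 3 = (xx r 1 * xx r 9) * (xx r 4 * xx r 6) * xx r 5 * xx r 10 := by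
  have := Tq_prod h0 h1 5 3 2 (by norm_num) (by norm_num)
  norm_num at this
  rw [this, show r^8 = r^(2*4) by norm_num, show PQ (r^10) (r^2) = PQ (r^10) (r^(2*1)) by norm_num,
    vE5 h0 h1, sp5 h0 h1, sp5 h0 h1]; ring
lemma vM : Tq r 5 1 = (xx r 3 * xx r 7) * (xx r 2 * xx r 8) * xx r 5 * xx r 10 := by
  have := Tq_prod h0 h1 5 1 4 (by norm_num) (by norm_num)
  norm_num at this
  rw [this, show r^6 = r^(2*3) by norm_num, show PQ (r^10) (r^4) = PQ (r^10) (r^(2*2)) by norm_num,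
    vE5 h0 h1, sp5 h0 h1, sp5 h0 h1]; ring
lemma vT1 : Tq r 10 8 = (xx r 1 * xx r 9) * xx r 10 := by
  have := Tq_prod h0 h1 10 8 2 (by norm_num) (by norm_num)
  norm_num at this
  rw [this]; simp only [xx, Nat.reduceMul]; ring
lemma vT2 : Tq r 10 6 = (xx r 2 * xx r 8) * xx r 10 := by
  have := Tq_prod h0 h1 10 6 4 (by norm_num) (by norm_num)
  norm_num at this
  rw [this]; simp only [xx, Nat.reduceMul]; ring
lemma vT3 : Tq r 10 4 = (xx r 3 * xx r 7) * xx r 10 := by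
  have := Tq_prod h0 h1 10 4 6 (by norm_num) (by norm_num)
  norm_num at this
  rw [this]; simp only [xx, Nat.reduceMul]; ring
lemma vT4 : Tq r 10 2 = (xx r 4 * xx r 6) * xx r 10 := by
  have := Tq_prod h0 h1 10 2 8 (by norm_num) (by norm_num)
  norm_num at this
  rw [this]; simp only [xx, Nat.reduceMul]; ring
lemma vT5 : Tq r 10 0 = xx r 5 ^2 * xx r 10 := by
  have := Tq_prod h0 h1 10 0 10 (by norm_num) (by norm_num)
  norm_num at this
  rw [this]; simp only [xx, Nat.reduceMul]; ring
lemma vS : Tq r 2 0 = ((xx r 1 * xx r 9) * (xx r 3 * xx r 7) * xx r 5)^2 * ((xx r 2 * xx r 8) * (xx r 4 * xx r 6) * xx r 10) := by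
  have := Tq_prod h0 h1 2 0 2 (by norm_num) (by norm_num)
  norm_num at this
  rw [this, vE2 h0 h1, show PQ (r^4) (r^2) = PQ (r^4) (r^(2*1)) by norm_num, sp2 h0 h1]; ring
lemma vNp : Tp r 5 3 * ((xx r 1 * xx r 9) * (xx r 4 * xx r 6)) = (xx r 2 * xx r 8) * xx r 5 * xx r 10 := by
  have := Tp_prod h0 h1 5 3 2 (by norm_num) (by norm_num)
  norm_num at this
  have e1 := PQ_neg (pow_pos h0 10) (pow_lt_one₀ h0.le h1 (by norm_num)) (r^(2*4))
  have e2 := PQ_neg (pow_pos h0 10) (pow_lt_one₀ h0.le h1 (by norm_num)) (r^(2*1))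
  rw [sp5 h0 h1, show (r^10)^2 = r^20 by ring, show (r^(2*4))^2 = r^(2*8) by ring] at e1
  rw [sp5 h0 h1, show (r^10)^2 = r^20 by ring, show (r^(2*1))^2 = r^(2*2) by ring] at e2
  rw [this, vE5 h0 h1]
  norm_num at e1 e2
  rw [show PQ (r^20) (r^16) = xx r 8 by simp [xx]] at e1
  rw [show PQ (r^20) (r^4) = xx r 2 by simp [xx]] at e2
  calc _ = (xx r 4 * xx r 9 * PQ (r^10) (-r^8)) * (xx r 1 * xx r 6 * PQ (r^10) (-r^2)) * (xx r 5 * xx r 10) := by ring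
    _ = _ := by rw [e1, e2]; ring
lemma vMp : Tp r 5 1 * ((xx r 3 * xx r 7) * (xx r 2 * xx r 8)) = (xx r 4 * xx r 6) * xx r 5 * xx r 10 := by
  have := Tp_prod h0 h1 5 1 4 (by norm_num) (by norm_num)
  norm_num at this
  have e1 := PQ_neg (pow_pos h0 10) (pow_lt_one₀ h0.le h1 (by norm_num)) (r^(2*3))
  have e2 := PQ_neg (pow_pos h0 10) (pow_lt_one₀ h0.le h1 (by norm_num)) (r^(2*2))
  rw [sp5 h0 h1, show (r^10)^2 = r^20 by ring, show (r^(2*3))^2 = r^(2*6) by ring] at e1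
  rw [sp5 h0 h1, show (r^10)^2 = r^20 by ring, show (r^(2*2))^2 = r^(2*4) by ring] at e2
  rw [this, vE5 h0 h1]
  norm_num at e1 e2
  rw [show PQ (r^20) (r^12) = xx r 6 by simp [xx]] at e1
  rw [show PQ (r^20) (r^8) = xx r 4 by simp [xx]] at e2
  calc _ = (xx r 3 * xx r 8 * PQ (r^10) (-r^6)) * (xx r 2 * xx r 7 * PQ (r^10) (-r^4)) * (xx r 5 * xx r 10) := by ring
    _ = _ := by rw [e1, e2]; ring

lemma vP (A : ℕ) (hA : 0 < A) : Tp r A A * PQ (r^(2*A)) (r^(2*A)) = 2 * PQ (r^(4*A)) (r^(4*A))^2 := by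
  have h := Tp_prod h0 h1 A A 0 hA (by omega)
  have hq0 : 0 < r^(2*A) := pow_pos h0 _
  have hq1 : r^(2*A) < 1 := pow_lt_one₀ h0.le h1 (by omega)
  have e := PQ_neg hq0 hq1 (r^(2*A))
  have f := PQ_head hq0 hq1 (-1)
  rw [show (r^(2*A))^2 = r^(4*A) by ring] at e
  rw [show A + A = 2*A by ring, pow_zero, f, show -1 * r^(2*A) = -r^(2*A) by ring] at h
  rw [h, ← e]; ring
end

lemma alg1 {q p p' s s' u v N M N2 M2 dN dM dN2 dM2 E1 E2 E5 a b : ℝ}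
    (q0 : 0 < q) (hp : 0 < p) (hp' : 0 < p') (hs : 0 < s) (hs' : 0 < s') (hu : 0 < u) (hv : 0 < v)
    (hN : N = p * s' * u * v) (hM : M = p' * s * u * v) (hN2 : N2 = s * v) (hM2 : M2 = s' * v)
    (hE1 : E1 = p * p' * (s * s') * u * v) (hE2 : E2 = s * s' * v) (hE5 : E5 = u * v)
    (hA : (s*s')^2 = q * (p*p')^2 + u^4 * (p*p'))
    (hB : (p*p')^4*(s*s')^2*u^4 = u^4 - 4*q*(p*p'))
    (hC : (p'*s')^2 - q^2*(p*s)^2 = s*s'*u^4)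
    (hD1 : N*M + 5 * (dN * M - N * dM) = E1^6)
    (hD2 : N2*M2 + 5/2 * (dN2 * M2 - N2 * dM2) = E2^6)
    (ha : a = q * N * N2^2) (hb : b = M * M2^2) :
    2 * q * E2^8 * E5^3 / E1^7 * (b^2-4*a*b-a^2)^2 =
      2 * (b * (a + q * dN * N2^2 + 2 * q * N * N2 * dN2) - a * (dM * M2^2 + 2 * M * M2 * dM2)) * (b^2+a*b-a^2) := by
  have hy : 0 < p * p' := mul_pos hp hp'
  have hw : 0 < s * s' := mul_pos hs hs'
  have k1 : b * (a + q * dN * N2^2 + 2 * q * N * N2 * dN2) - a * (dM * M2^2 + 2 * M * M2 * dM2)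
      = 1/5 * q * N2 * M2 * (N2*M2*E1^6 + 4 * N * M * E2^6) := by
    rw [ha, hb, ← hD1, ← hD2]; ring
  have k2 : N2*M2*E1^6 + 4 * N * M * E2^6 = 5 * ((p*p')^2 * (s*s')^5 * u^6 * v^8) := by
    rw [hN2, hM2, hN, hM, hE1, hE2]
    linear_combination ((s*s')^5 * (p*p')*u^2*v^8) * (p*p') * hB + 4 * ((s*s')^5 * (p*p')*u^2*v^8) * hA
  have k3 : b^2-4*a*b-a^2 = ((s*s')*u*v^3)^2 * (s*s') * ((p*p')^4*(s*s')^2*u^4) := by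
    rw [ha, hb, hN2, hM2, hN, hM, hB]
    linear_combination ((s*s')*u*v^3)^2 * hC
  have k4 : (b^2+a*b-a^2) * (p*p') = ((s*s')*u*v^3)^2 * (s*s')^3 := by
    rw [ha, hb, hN2, hM2, hN, hM]
    linear_combination ((s*s')*u*v^3)^2 * (p*p') * hC - ((s*s')*u*v^3)^2 * (s*s') * hA
  have k5 : b^2+a*b-a^2 = ((s*s')*u*v^3)^2 * (s*s')^3 / (p*p') := by
    rw [eq_div_iff hy.ne', k4]
  rw [k1, k2, k3, k5, hN2, hM2, hE1, hE2, hE5]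
  field_simp

section
variable {r : ℝ} (h0 : 0 < r) (h1 : r < 1)
include h0 h1

lemma Tq_dbl (A B : ℤ) : Tq (r^2) A B = Tq r (2*A) (2*B) := by
  unfold Tq
  congr 1; funext n
  simp only [tq]
  rw [← zpow_natCast, ← zpow_mul]
  congr 2; push_cast; ring

lemma real_main {a b : ℝ}
    (ha : a = r^2 * Tq r 5 3 * Tq (r^2) 5 3 ^2) (hb : b = Tq r 5 1 * Tq (r^2) 5 1^2) :
    2 * r^2 * PQ ((r^2)^2) ((r^2)^2)^8 * PQ ((r^2)^5) ((r^2)^5)^3 / PQ (r^2) (r^2)^7 * (b^2-4*a*b-a^2)^2 =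
      2 * (b * (a + r^2 * (Tw r 5 3 5 3 0 / 2) * Tq (r^2) 5 3^2 + 2 * r^2 * Tq r 5 3 * Tq (r^2) 5 3 * Tw (r^2) 5 3 5 3 0)
       - a * ((Tw r 5 1 5 1 0 / 2) * Tq (r^2) 5 1^2 + 2 * Tq r 5 1 * Tq (r^2) 5 1 * Tw (r^2) 5 1 5 1 0)) * (b^2+a*b-a^2) := by
  have q0 : 0 < r^2 := pow_pos h0 2
  have q1 : r^2 < 1 := pow_lt_one₀ h0.le h1 two_ne_zero
  have P : ∀ i, 0 < i → 0 < xx r i := fun i hi => xx_pos h0 h1 i hi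
  have p1 := P 1 (by norm_num)
  have p2 := P 2 (by norm_num)
  have p3 := P 3 (by norm_num)
  have p4 := P 4 (by norm_num)
  have p5 := P 5 (by norm_num)
  have p6 := P 6 (by norm_num)
  have p7 := P 7 (by norm_num)
  have p8 := P 8 (by norm_num)
  have p9 := P 9 (by norm_num)
  have p10 := P 10 (by norm_num)
  have hp := mul_pos p1 p9
  have hp' := mul_pos p3 p7
  have hs := mul_pos p2 p8
  have hs' := mul_pos p4 p6
  have D1 := idD h0 h1
  have D2 := idD q0 q1
  have iA := idA h0 h1
  have iB := idB h0 h1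
  have iC1 := idC1 h0 h1
  have iC2 := idC2 h0 h1
  have Np := vNp h0 h1
  have Mp := vMp h0 h1
  have P1 := vP h0 h1 1 (by norm_num)
  have P5 := vP h0 h1 5 (by norm_num)
  norm_num at P1 P5
  rw [sp1 h0 h1, vE2 h0 h1] at P1
  rw [vE5 h0 h1, vE10 h0 h1] at P5
  rw [vT3 h0 h1, vT4 h0 h1, vT2 h0 h1, vT1 h0 h1, vN h0 h1] at iC1
  rw [vT3 h0 h1, vT4 h0 h1, vT2 h0 h1, vT1 h0 h1, vM h0 h1] at iC2
  rw [vS h0 h1, vT5 h0 h1, vT3 h0 h1, vT1 h0 h1] at iB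
  have hE2 : PQ ((r^2)^2) ((r^2)^2) = PQ (r^4) (r^4) := by ring_nf
  have hE5 : PQ ((r^2)^5) ((r^2)^5) = PQ (r^10) (r^10) := by ring_nf
  have hN2 := Tq_dbl h0 h1 5 3
  have hM2 := Tq_dbl h0 h1 5 1
  norm_num at hN2 hM2
  refine alg1 (p := xx r 1 * xx r 9) (p' := xx r 3 * xx r 7) (s := xx r 2 * xx r 8) (s' := xx r 4 * xx r 6)
    (u := xx r 5) (v := xx r 10) q0 hp hp' hs hs' p5 p10 (vN h0 h1) (vM h0 h1) (hN2.trans (vT2 h0 h1)) (hM2.trans (vT4 h0 h1))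
    (sp1 h0 h1) (hE2.trans (vE2 h0 h1)) (hE5.trans (vE5 h0 h1)) ?_ ?_ ?_ ?_ ?_ ha hb
  all_goals generalize xx r 1 * xx r 9 = p at *
  all_goals generalize xx r 3 * xx r 7 = p' at *
  all_goals generalize xx r 2 * xx r 8 = s at *
  all_goals generalize xx r 4 * xx r 6 = s' at *
  all_goals generalize xx r 5 = u at *
  all_goals generalize xx r 10 = v at *
  · have e1 : Tp r 1 1 = 2 * (s * s') * v / (p * p' * u) := by
      rw [eq_div_iff (by positivity)]
      have : (s * s' * v) ≠ 0 := by positivity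
      apply mul_left_cancel₀ this
      linear_combination P1
    have e2 : Tp r 5 5 = 2 * v / u := by
      rw [eq_div_iff (by positivity)]
      apply mul_left_cancel₀ p10.ne'
      linear_combination P5
    have e3 : Tp r 5 3 * Tp r 5 1 = u^2*v^2/(p*p') := by
      rw [eq_div_iff (by positivity)]
      have : (s * s') ≠ 0 := by positivity
      apply mul_left_cancel₀ this
      linear_combination (Tp r 5 1 * (p' * s)) * Np + s * u * v * Mp
    rw [e1, e2, e3] at iA
    field_simp at iA
    linear_combination iA/4
  · have : v^2 ≠ 0 := by positivity
    apply mul_left_cancel₀ this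
    linear_combination iB
  · have e3 : Tp r 5 3 * Tp r 5 1 * (p * p') = u^2*v^2 := by
      have : (s * s') ≠ 0 := by positivity
      apply mul_left_cancel₀ this
      linear_combination (Tp r 5 1 * (p' * s)) * Np + s * u * v * Mp
    have : v^4 ≠ 0 := by positivity
    apply mul_left_cancel₀ this
    have := congrArg₂ (· * ·) iC1 iC2
    beta_reduce at this
    linear_combination s * s' * u^2 * v^2 * e3 - this
  · linear_combination D1
  · linear_combination D2
end

open PowerSeries

def HasEv (A : ℤ⟦X⟧) (q v : ℝ) : Prop :=
  Summable (fun n => ‖((coeff n A : ℤ) : ℝ) * q^n‖) ∧ ∑' n, ((coeff n A : ℤ) : ℝ) * q^n = v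

namespace HasEv
variable {A B : ℤ⟦X⟧} {q v w : ℝ}

lemma hs (h : HasEv A q v) : HasSum (fun n => ((coeff n A : ℤ) : ℝ) * q^n) v := by
  have := h.1.of_norm.hasSum
  rwa [h.2] at this
lemma mk' (h : Summable (fun n => ‖((coeff n A : ℤ) : ℝ) * q^n‖)) (h' : HasSum (fun n => ((coeff n A : ℤ) : ℝ) * q^n) v) :
    HasEv A q v := ⟨h, h'.tsum_eq⟩
lemma uniq (h : HasEv A q v) (h' : HasEv A q w) : v = w := h.2.symm.trans h'.2
lemma add (h : HasEv A q v) (h' : HasEv B q w) : HasEv (A + B) q (v + w) := by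
  have e : (fun n => ((coeff n (A+B) : ℤ) : ℝ) * q^n) = fun n => ((coeff n A : ℤ) : ℝ) * q^n + ((coeff n B : ℤ) : ℝ) * q^n := by
    funext n; rw [map_add]; push_cast; ring
  have k := h.hs.add h'.hs
  rw [← e] at k
  exact mk' k.summable.norm k
lemma neg (h : HasEv A q v) : HasEv (-A) q (-v) := by
  have e : (fun n => ((coeff n (-A) : ℤ) : ℝ) * q^n) = fun n => -(((coeff n A : ℤ) : ℝ) * q^n) := by
    funext n; rw [map_neg]; push_cast; ring
  have k := h.hs.neg
  rw [← e] at k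
  exact mk' k.summable.norm k
lemma sub (h : HasEv A q v) (h' : HasEv B q w) : HasEv (A - B) q (v - w) := by
  rw [sub_eq_add_neg, sub_eq_add_neg]; exact h.add h'.neg
lemma mul (h : HasEv A q v) (h' : HasEv B q w) : HasEv (A * B) q (v * w) := by
  have e : (fun n => ((coeff n (A*B) : ℤ) : ℝ) * q^n) =
      fun n => ∑ kl ∈ Finset.HasAntidiagonal.antidiagonal n, (((coeff kl.1 A : ℤ) : ℝ) * q^kl.1) * (((coeff kl.2 B : ℤ) : ℝ) * q^kl.2) := by
    funext n; rw [coeff_mul]; push_cast; rw [Finset.sum_mul]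
    refine Finset.sum_congr rfl (fun p hp => ?_)
    rw [← Finset.HasAntidiagonal.mem_antidiagonal.mp hp, pow_add]; ring
  constructor
  · have := summable_norm_sum_mul_antidiagonal_of_summable_norm h.1 h'.1
    exact this.congr (fun n => congrArg norm (congrFun e n).symm)
  · rw [e, ← tsum_mul_tsum_eq_tsum_sum_antidiagonal_of_summable_norm h.1 h'.1, h.2, h'.2]
lemma const (k : ℤ) (q : ℝ) : HasEv (C k) q k := by
  have : HasSum (fun n => ((coeff n (C k) : ℤ) : ℝ) * q^n) k := by
    convert hasSum_single (f := fun n => ((coeff n (C k : ℤ⟦X⟧) : ℤ) : ℝ) * q^n) 0 ?_ using 1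
    · simp
    · intro n hn; beta_reduce; rw [coeff_C, if_neg hn]; simp
  exact mk' this.summable.norm this
lemma X (q : ℝ) : HasEv X q q := by
  have : HasSum (fun n => ((coeff n (PowerSeries.X : ℤ⟦X⟧) : ℤ) : ℝ) * q^n) q := by
    convert hasSum_single (f := fun n => ((coeff n (PowerSeries.X : ℤ⟦X⟧) : ℤ) : ℝ) * q^n) 1 ?_ using 1
    · simp
    · intro n hn; simp [coeff_X, hn]
  exact mk' this.summable.norm this
lemma one (q : ℝ) : HasEv 1 q 1 := by simpa using const 1 q
lemma two (q : ℝ) : HasEv 2 q 2 := by simpa using const 2 q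
lemma four (q : ℝ) : HasEv 4 q 4 := by simpa using const 4 q
lemma pow (h : HasEv A q v) (k : ℕ) : HasEv (A^k) q (v^k) := by
  induction k with
  | zero => simpa using one q
  | succ k ih => rw [pow_succ, pow_succ]; exact ih.mul h

lemma divX (hq : q ≠ 0) (h : HasEv (PowerSeries.X * A) q v) : HasEv A q (v / q) := by
  have e : ∀ n, ((coeff (n+1) (PowerSeries.X * A) : ℤ) : ℝ) * q^(n+1) = q * (((coeff n A : ℤ) : ℝ) * q^n) := by
    intro n; rw [coeff_succ_X_mul]; ring
  have k := h.hs
  rw [← hasSum_nat_add_iff' 1] at k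
  simp only [e] at k
  simp at k
  have k2 := k.mul_left q⁻¹
  simp only [inv_mul_cancel_left₀ hq] at k2
  rw [div_eq_inv_mul]
  exact mk' k2.summable.norm k2
end HasEv

lemma ev_coeff0 {A : ℤ⟦X⟧} (h : ∀ q : ℝ, 0 < q → q < 1 → HasEv A q 0) : coeff 0 A = 0 := by
  obtain ⟨B, hB⟩ : X ∣ A - C (coeff 0 A) := by
    rw [X_dvd_iff]; simp
  set a := coeff 0 A
  have hBv : ∀ q : ℝ, 0 < q → q < 1 → HasEv B q ((0 - a) / q) := fun q h0 h1 =>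
    HasEv.divX h0.ne' (hB ▸ (h q h0 h1).sub (HasEv.const a q))
  set K := ∑' n, ‖((coeff n B : ℤ) : ℝ) * (1/2)^n‖
  have hK := (hBv (1/2) (by norm_num) (by norm_num)).1
  have bd : ∀ q : ℝ, 0 < q → q ≤ 1/2 → |(a:ℝ)| ≤ q * K := by
    intro q h0 h1
    have hb := hBv q h0 (by linarith)
    have h2 : ‖((0:ℝ) - a) / q‖ ≤ K := by
      rw [← hb.2]
      refine (norm_tsum_le_tsum_norm hb.1).trans (hb.1.tsum_le_tsum (fun n => ?_) hK)
      rw [norm_mul, norm_mul]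
      gcongr
      rw [norm_pow, norm_pow]
      gcongr
      rw [Real.norm_of_nonneg h0.le, Real.norm_of_nonneg (by norm_num)]; exact h1
    rw [zero_sub, norm_div, norm_neg, Real.norm_eq_abs, Real.norm_of_nonneg h0.le, div_le_iff₀ h0] at h2
    linarith
  have : |(a:ℝ)| ≤ 0 := by
    have t : Tendsto (fun q : ℝ => q * K) (𝓝[>] 0) (𝓝 0) := by
      have : Tendsto (fun q : ℝ => q * K) (𝓝 0) (𝓝 (0 * K)) := (continuous_id.mul continuous_const).tendsto 0
      rw [zero_mul] at this
      exact this.mono_left nhdsWithin_le_nhds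
    refine ge_of_tendsto t ?_
    filter_upwards [Ioc_mem_nhdsGT (show (0:ℝ) < 1/2 by norm_num)] with q hq using bd q hq.1 hq.2
  have := abs_nonpos_iff.mp this
  exact_mod_cast this

lemma ev_zero {A : ℤ⟦X⟧} (h : ∀ q : ℝ, 0 < q → q < 1 → HasEv A q 0) : A = 0 := by
  have : ∀ n (A : ℤ⟦X⟧), (∀ q : ℝ, 0 < q → q < 1 → HasEv A q 0) → coeff n A = 0 := by
    intro n
    induction n with
    | zero => exact fun A h => ev_coeff0 h
    | succ n ih =>
      intro A h
      obtain ⟨B, hB⟩ : X ∣ A := by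
        rw [X_dvd_iff]; simpa using ev_coeff0 h
      subst hB
      rw [coeff_succ_X_mul]
      refine ih B (fun q h0 h1 => ?_)
      simpa using HasEv.divX h0.ne' (h q h0 h1)
  ext n; simpa using this n A h

lemma ev_ext {A B : ℤ⟦X⟧} {v w : ℝ → ℝ} (hA : ∀ q : ℝ, 0 < q → q < 1 → HasEv A q (v q))
    (hB : ∀ q : ℝ, 0 < q → q < 1 → HasEv B q (w q)) (h : ∀ q, 0 < q → q < 1 → v q = w q) : A = B := by
  rw [← sub_eq_zero]
  refine ev_zero (fun q h0 h1 => ?_)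
  have := (hA q h0 h1).sub (hB q h0 h1)
  rwa [h q h0 h1, sub_self] at this

/-- Euler operator -/
noncomputable def dl (A : ℤ⟦X⟧) : ℤ⟦X⟧ := X * derivative ℤ A
lemma coeff_dl (A : ℤ⟦X⟧) (n : ℕ) : coeff n (dl A) = n * coeff n A := by
  unfold dl
  cases n with
  | zero => simp
  | succ n => rw [coeff_succ_X_mul, coeff_derivative]; push_cast; ring
lemma dl_mul (A B : ℤ⟦X⟧) : dl (A * B) = dl A * B + A * dl B := by
  unfold dl; rw [Derivation.leibniz]; simp only [smul_eq_mul]; ring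
lemma dl_add (A B : ℤ⟦X⟧) : dl (A + B) = dl A + dl B := by
  unfold dl; rw [map_add]; ring
lemma dl_sub (A B : ℤ⟦X⟧) : dl (A - B) = dl A - dl B := by
  unfold dl; rw [map_sub]; ring
lemma dl_sq (A : ℤ⟦X⟧) : dl (A^2) = 2 * A * dl A := by
  rw [sq, dl_mul]; ring
lemma dl_X : dl X = X := by unfold dl; simp
lemma dl_C (k : ℤ) : dl (C k) = 0 := by unfold dl; simp

noncomputable def ser (c : ℤ → ℤ) (e : ℤ → ℕ) : ℤ⟦X⟧ :=
  PowerSeries.mk fun m => ∑ i ∈ (Finset.Icc (-m:ℤ) m).filter (fun i => e i = m), c i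

lemma coeff_ser (c : ℤ → ℤ) (e : ℤ → ℕ) (m : ℕ) : coeff m (ser c e) =
   ∑ i ∈ (Finset.Icc (-m:ℤ) m).filter (fun i => e i = m), c i := coeff_mk _ _

lemma dl_ser (c : ℤ → ℤ) (e : ℤ → ℕ) : dl (ser c e) = ser (fun i => e i * c i) e := by
  ext m
  rw [coeff_dl, coeff_ser, coeff_ser, Finset.mul_sum]
  refine Finset.sum_congr rfl (fun i hi => ?_)
  rw [(Finset.mem_filter.mp hi).2]

lemma ser_ev (c : ℤ → ℤ) (e : ℤ → ℕ) (he : ∀ i, |i| ≤ e i) {q : ℝ} (h0 : 0 < q)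
    (hs : Summable (fun i => ‖(c i:ℝ) * q^(e i)‖)) :
    HasEv (ser c e) q (∑' i, (c i:ℝ) * q^(e i)) := by
  have fib : ∀ m : ℕ, e ⁻¹' {m} = ((Finset.Icc (-m:ℤ) m).filter (fun i => e i = m) : Set ℤ) := by
    intro m; ext i
    simp only [Set.mem_preimage, Set.mem_singleton_iff, Finset.coe_filter, Finset.mem_Icc, Set.mem_ofPred_eq]
    constructor
    · intro h
      have := he i
      rw [h] at this
      exact ⟨abs_le.mp this, h⟩
    · exact fun h => h.2
  have key : ∀ f : ℤ → ℝ, ∀ m : ℕ, ∑' b : e ⁻¹' {m}, f b = ∑ i ∈ (Finset.Icc (-m:ℤ) m).filter (fun i => e i = m), f i := by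
    intro f m
    rw [fib m]
    exact Finset.tsum_subtype' _ f
  have cf : ∀ m : ℕ, ((coeff m (ser c e) : ℤ) : ℝ) * q^m = ∑ i ∈ (Finset.Icc (-m:ℤ) m).filter (fun i => e i = m), (c i:ℝ) * q^(e i) := by
    intro m
    rw [coeff_ser]; push_cast; rw [Finset.sum_mul]
    refine Finset.sum_congr rfl (fun i hi => ?_)
    rw [(Finset.mem_filter.mp hi).2]
  have a := hs.of_norm.hasSum.tsum_fiberwise e
  have E : (fun m : ℕ => ∑' b : e ⁻¹' {m}, (c b : ℝ) * q^(e b)) = fun m : ℕ => ((coeff m (ser c e) : ℤ) : ℝ) * q^m :=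
    funext fun m => (key (fun i => (c i : ℝ) * q^(e i)) m).trans (cf m).symm
  rw [E] at a
  exact HasEv.mk' a.summable.norm a

def sgi (i : ℤ) : ℤ := if i % 2 = 0 then 1 else -1
lemma sgi_cast (i : ℤ) : (sgi i : ℝ) = sg i := by
  rcases Int.even_or_odd' i with ⟨k, rfl | rfl⟩
  · rw [sg_two_mul, sgi, if_pos (by omega)]; simp
  · rw [sg_add, sg_two_mul, sg_one, sgi, if_neg (by omega)]; simp

lemma th_ev {q ρ : ℝ} (h0 : 0 < q) (r0 : 0 < ρ) (r1 : ρ < 1) (A B : ℤ) (hA : 0 < A) (e : ℤ → ℕ)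
    (he : ∀ i, |i| ≤ e i) (h : ∀ i, q^(e i) = ρ^(A*i^2+B*i)) : HasEv (ser sgi e) q (Tq ρ A B) := by
  have E : (fun i => (sgi i:ℝ) * q^(e i)) = tq ρ A B := by
    funext i; rw [sgi_cast, h, tq]
  have := ser_ev sgi e he h0 (q := q) (by simp only [congrFun E]; exact tq_s r0 r1 A B hA)
  rwa [E] at this

lemma th_dl {q ρ κ : ℝ} (h0 : 0 < q) (r0 : 0 < ρ) (r1 : ρ < 1) (A B : ℤ) (hA : 0 < A) (e : ℤ → ℕ)
    (he : ∀ i, |i| ≤ e i) (h : ∀ i, q^(e i) = ρ^(A*i^2+B*i)) (h' : ∀ i, (e i : ℝ) = κ * (A * (i:ℝ)^2+B*i+0)) :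
    HasEv (dl (ser sgi e)) q (κ * Tw ρ A B A B 0) := by
  have E : (fun i => (((e i * sgi i : ℤ)):ℝ) * q^(e i)) = fun i => κ * tw ρ A B A B 0 i := by
    funext i; push_cast; rw [sgi_cast, h, h', tw, tq]; ring
  rw [dl_ser]
  have := ser_ev (fun i => e i * sgi i) e he h0 (q := q)
    (by simp only [congrFun E]; exact ((tw_hs r0 r1 A B hA A B 0).mul_left κ).summable.norm)
  rw [E, tsum_mul_left] at this
  exact this


noncomputable def gk (k : ℕ) : ℤ⟦X⟧ := PowerSeries.mk fun n => if k ∣ n then 1 else 0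
noncomputable def Qk (J : ℕ) : ℤ⟦X⟧ := ∏ j ∈ Finset.range J, gk (j+1)
noncomputable def pser : ℤ⟦X⟧ := PowerSeries.mk fun n => coeff n (Qk n)

lemma gk_rec (k : ℕ) (hk : 0 < k) : gk k = 1 + X^k * gk k := by
  ext n
  rw [map_add, coeff_X_pow_mul', coeff_one]
  simp only [gk, coeff_mk]
  by_cases h : k ≤ n
  · rw [if_pos h, if_neg (by omega : n ≠ 0), zero_add]
    simp only [Nat.dvd_sub_self_right, (Nat.dvd_sub_iff_left h (dvd_refl k))]
  · rw [if_neg h, add_zero]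
    by_cases h' : n = 0
    · simp [h']
    · rw [if_neg h', if_neg]
      exact fun hd => h (Nat.le_of_dvd (by omega) hd)

lemma gk_nonneg (k n : ℕ) : 0 ≤ coeff n (gk k) := by
  simp only [gk, coeff_mk]; split_ifs <;> norm_num
lemma Qk_nonneg (J n : ℕ) : 0 ≤ coeff n (Qk J) := by
  induction J generalizing n with
  | zero => simp only [Qk, Finset.prod_range_zero, coeff_one]; split_ifs <;> norm_num
  | succ J ih =>
    rw [Qk, Finset.prod_range_succ, coeff_mul]
    exact Finset.sum_nonneg fun p _ => mul_nonneg (ih _) (gk_nonneg _ _)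
lemma Qk_rec (J : ℕ) : Qk (J+1) = Qk J + X^(J+1) * Qk (J+1) := by
  have : Qk (J+1) = Qk J * gk (J+1) := by rw [Qk, Finset.prod_range_succ, Qk]
  have g := gk_rec (J+1) (by omega)
  rw [this]
  linear_combination Qk J * g
lemma Qk_stab (J n : ℕ) (h : n ≤ J) : coeff n (Qk (J+1)) = coeff n (Qk J) := by
  rw [Qk_rec, map_add, coeff_X_pow_mul', if_neg (by omega), add_zero]
lemma Qk_mono (J n : ℕ) : coeff n (Qk J) ≤ coeff n (Qk (J+1)) := by
  rw [Qk_rec, map_add, coeff_X_pow_mul']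
  split_ifs
  · linarith [Qk_nonneg (J+1) (n-(J+1))]
  · simp
lemma Qk_eq (n k : ℕ) : coeff n (Qk (n+k)) = coeff n pser := by
  rw [pser, coeff_mk]
  induction k with
  | zero => rfl
  | succ k ih => rw [← add_assoc, Qk_stab _ _ (by omega), ih]
lemma Qk_le (J n : ℕ) : coeff n (Qk J) ≤ coeff n pser := by
  rw [← Qk_eq n J]
  exact monotone_nat_of_le_succ (f := fun J => coeff n (Qk J)) (fun J => Qk_mono J n) (by omega)

section
variable {q : ℝ} (h0 : 0 < q) (h1 : q < 1)
include h0 h1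
lemma gk_ev (k : ℕ) (hk : 0 < k) : HasEv (gk k) q (1 - q^k)⁻¹ := by
  have hs : Summable (fun n => ‖((coeff n (gk k) : ℤ) : ℝ) * q^n‖) := by
    refine (summable_geometric_of_lt_one h0.le h1).of_nonneg_of_le (fun _ => norm_nonneg _) (fun n => ?_)
    rw [norm_mul, norm_pow, Real.norm_of_nonneg h0.le]
    refine mul_le_of_le_one_left (by positivity) ?_
    simp only [gk, coeff_mk]; split_ifs <;> simp
  have a : HasEv (gk k) q _ := ⟨hs, rfl⟩
  have b := (HasEv.one q).add (((HasEv.X q).pow k).mul a)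
  rw [← gk_rec k hk] at b
  have c := a.uniq b
  set v := ∑' n, ((coeff n (gk k) : ℤ) : ℝ) * q^n
  have : q^k < 1 := pow_lt_one₀ h0.le h1 hk.ne'
  have e : v = (1 - q^k)⁻¹ := by
    refine eq_inv_of_mul_eq_one_left ?_; linear_combination c
  rwa [e] at a
lemma Qk_ev (J : ℕ) : HasEv (Qk J) q (∏ j ∈ Finset.range J, (1 - q * q^j))⁻¹ := by
  induction J with
  | zero => simpa [Qk] using HasEv.one q
  | succ J ih =>
    have : Qk (J+1) = Qk J * gk (J+1) := by rw [Qk, Finset.prod_range_succ, Qk]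
    rw [this, Finset.prod_range_succ, mul_inv, ← pow_succ']
    exact ih.mul (gk_ev h0 h1 (J+1) (by omega))

lemma pser_ev : HasEv pser q (PQ q q)⁻¹ := by
  have hE := PQ_pos h0 h1 h0 h1
  have t := (PQ_tendsto h0 h1 q).inv₀ hE.ne'
  have anti : Antitone (fun J => ∏ j ∈ Finset.range J, (1 - q * q^j)) := by
    refine antitone_nat_of_succ_le (fun J => ?_)
    rw [Finset.prod_range_succ]
    refine mul_le_of_le_one_right (Finset.prod_nonneg fun j _ => ?_) ?_
    · rw [← pow_succ']; linarith [pow_le_one₀ (n := j+1) h0.le h1.le]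
    · have := pow_pos h0 J; nlinarith
  have le : ∀ J, (∏ j ∈ Finset.range J, (1 - q * q^j))⁻¹ ≤ (PQ q q)⁻¹ := fun J => by
    gcongr
    exact anti.le_of_tendsto (PQ_tendsto h0 h1 q) J
  have nn : ∀ (A : ℤ⟦X⟧), (∀ n, 0 ≤ coeff n A) → ∀ n, 0 ≤ ((coeff n A : ℤ) : ℝ) * q^n := fun A hA n =>
    mul_nonneg (by exact_mod_cast hA n) (by positivity)
  have pn : ∀ n, 0 ≤ coeff n pser := fun n => (Qk_nonneg 0 n).trans (Qk_le 0 n)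
  have part : ∀ m, ∑ n ∈ Finset.range m, ((coeff n pser : ℤ) : ℝ) * q^n ≤ (PQ q q)⁻¹ := by
    intro m
    have e : ∑ n ∈ Finset.range m, ((coeff n pser : ℤ) : ℝ) * q^n = ∑ n ∈ Finset.range m, ((coeff n (Qk m) : ℤ) : ℝ) * q^n := by
      refine Finset.sum_congr rfl (fun n hn => ?_)
      have hn := Finset.mem_range.mp hn
      rw [← Qk_eq n (m-n), show n + (m-n) = m by omega]
    rw [e]
    refine le_trans ?_ (le m)
    have k := (Qk_ev h0 h1 m).hs
    exact sum_le_hasSum _ (fun n _ => nn _ (Qk_nonneg m) n) k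
  have hsm : Summable (fun n => ((coeff n pser : ℤ) : ℝ) * q^n) :=
    summable_of_sum_range_le (nn _ pn) part
  refine ⟨hsm.norm, le_antisymm (Real.tsum_le_of_sum_range_le (nn _ pn) part) ?_⟩
  refine le_of_tendsto t (Eventually.of_forall fun J => ?_)
  have k := (Qk_ev h0 h1 J).hs
  refine hasSum_le (fun n => ?_) k hsm.hasSum
  have := Qk_le J n
  gcongr
end

def eN (i : ℤ) : ℕ := ((5*i^2+3*i)/2).toNat
def eM (i : ℤ) : ℕ := ((5*i^2+i)/2).toNat
def eN2 (i : ℤ) : ℕ := (5*i^2+3*i).toNat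
def eM2 (i : ℤ) : ℕ := (5*i^2+i).toNat
def eE2 (i : ℤ) : ℕ := (3*i^2+i).toNat
def eE5 (i : ℤ) : ℕ := (5*((3*i^2+i)/2)).toNat

lemma quad_ge (A B : ℤ) (i : ℤ) (h : |B| + 2 ≤ A) : 2 * |i| ≤ A*i^2+B*i := by
  have h1 : |i| ≤ i^2 := by
    by_cases hi : i = 0
    · simp [hi]
    · rw [← sq_abs]; nlinarith [Int.one_le_abs hi]
  have h2 : -(|B| * |i|) ≤ B * i := by rw [← abs_mul]; exact neg_abs_le _
  nlinarith [abs_nonneg i, abs_nonneg B]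
lemma dv2 (A B : ℤ) (h : (A+B) % 2 = 0) (i : ℤ) : 2 * ((A*i^2+B*i)/2) = A*i^2+B*i := by
  apply Int.mul_ediv_cancel'
  rcases Int.even_or_odd' i with ⟨k, rfl | rfl⟩
  · exact ⟨A*(2*k^2)+B*k, by ring⟩
  · obtain ⟨m, hm⟩ : 2 ∣ A + B := Int.dvd_of_emod_eq_zero h
    exact ⟨A*(2*k^2+2*k)+B*k + m, by linear_combination hm⟩

lemma eN_c (i : ℤ) : 2 * (eN i : ℤ) = 5*i^2+3*i := by
  have := quad_ge 5 3 i (by norm_num)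
  have := dv2 5 3 (by norm_num) i
  have := abs_nonneg i
  unfold eN; rw [Int.toNat_of_nonneg] <;> omega
lemma eM_c (i : ℤ) : 2 * (eM i : ℤ) = 5*i^2+1*i := by
  have := quad_ge 5 1 i (by norm_num)
  have := dv2 5 1 (by norm_num) i
  have := abs_nonneg i
  simp only [one_mul] at *
  unfold eM; rw [Int.toNat_of_nonneg] <;> omega
lemma eN2_c (i : ℤ) : (eN2 i : ℤ) = 5*i^2+3*i := by
  have := quad_ge 5 3 i (by norm_num)
  have := abs_nonneg i
  unfold eN2; rw [Int.toNat_of_nonneg]; omega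
lemma eM2_c (i : ℤ) : (eM2 i : ℤ) = 5*i^2+1*i := by
  have := quad_ge 5 1 i (by norm_num)
  have := abs_nonneg i
  simp only [one_mul] at *
  unfold eM2; rw [Int.toNat_of_nonneg]; omega
lemma eE2_c (i : ℤ) : (eE2 i : ℤ) = 3*i^2+1*i := by
  have := quad_ge 3 1 i (by norm_num)
  have := abs_nonneg i
  simp only [one_mul] at *
  unfold eE2; rw [Int.toNat_of_nonneg]; omega
lemma eE5_c (i : ℤ) : 2 * (eE5 i : ℤ) = 5*(3*i^2+1*i) := by
  have := quad_ge 3 1 i (by norm_num)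
  have := dv2 3 1 (by norm_num) i
  have := abs_nonneg i
  simp only [one_mul] at *
  unfold eE5; rw [Int.toNat_of_nonneg] <;> omega


section
variable {r : ℝ} (h0 : 0 < r) (h1 : r < 1)
include h0 h1

lemma pwr (e : ℕ) (m : ℤ) (h : 2 * (e:ℤ) = m) : (r^2)^e = r^m := by
  rw [← pow_mul, ← zpow_natCast, ← h]; push_cast; rfl
lemma N_ev : HasEv (ser sgi eN) (r^2) (Tq r 5 3) :=
  th_ev (by positivity) h0 h1 5 3 (by norm_num) eN
    (fun i => by have := eN_c i; have := quad_ge 5 3 i (by norm_num); omega)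
    (fun i => pwr h0 h1 _ _ (eN_c i))
lemma M_ev : HasEv (ser sgi eM) (r^2) (Tq r 5 1) :=
  th_ev (by positivity) h0 h1 5 1 (by norm_num) eM
    (fun i => by have := eM_c i; have := quad_ge 5 1 i (by norm_num); omega)
    (fun i => pwr h0 h1 _ _ (eM_c i))
lemma dN_ev : HasEv (dl (ser sgi eN)) (r^2) (1/2 * Tw r 5 3 5 3 0) := by
  have := th_dl (κ := 1/2) (by positivity) h0 h1 5 3 (by norm_num) eN
    (fun i => by have := eN_c i; have := quad_ge 5 3 i (by norm_num); omega)
    (fun i => pwr h0 h1 _ _ (eN_c i))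
    (fun i => by have := congrArg (Int.cast (R := ℝ)) (eN_c i); push_cast at this ⊢; linarith)
  simpa using this
lemma dM_ev : HasEv (dl (ser sgi eM)) (r^2) (1/2 * Tw r 5 1 5 1 0) := by
  have := th_dl (κ := 1/2) (by positivity) h0 h1 5 1 (by norm_num) eM
    (fun i => by have := eM_c i; have := quad_ge 5 1 i (by norm_num); omega)
    (fun i => pwr h0 h1 _ _ (eM_c i))
    (fun i => by have := congrArg (Int.cast (R := ℝ)) (eM_c i); push_cast at this ⊢; linarith)
  simpa using this
lemma N2_ev : HasEv (ser sgi eN2) r (Tq r 5 3) :=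
  th_ev h0 h0 h1 5 3 (by norm_num) eN2
    (fun i => by have := eN2_c i; have := quad_ge 5 3 i (by norm_num); have := abs_nonneg i; omega)
    (fun i => by rw [← eN2_c i, zpow_natCast])
lemma M2_ev : HasEv (ser sgi eM2) r (Tq r 5 1) :=
  th_ev h0 h0 h1 5 1 (by norm_num) eM2
    (fun i => by have := eM2_c i; have := quad_ge 5 1 i (by norm_num); have := abs_nonneg i; omega)
    (fun i => by rw [← eM2_c i, zpow_natCast])
lemma dN2_ev : HasEv (dl (ser sgi eN2)) r (1 * Tw r 5 3 5 3 0) := by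
  have := th_dl (κ := 1) h0 h0 h1 5 3 (by norm_num) eN2
    (fun i => by have := eN2_c i; have := quad_ge 5 3 i (by norm_num); have := abs_nonneg i; omega)
    (fun i => by rw [← eN2_c i, zpow_natCast])
    (fun i => by have := congrArg (Int.cast (R := ℝ)) (eN2_c i); push_cast at this ⊢; linarith)
  simpa using this
lemma dM2_ev : HasEv (dl (ser sgi eM2)) r (1 * Tw r 5 1 5 1 0) := by
  have := th_dl (κ := 1) h0 h0 h1 5 1 (by norm_num) eM2
    (fun i => by have := eM2_c i; have := quad_ge 5 1 i (by norm_num); have := abs_nonneg i; omega)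
    (fun i => by rw [← eM2_c i, zpow_natCast])
    (fun i => by have := congrArg (Int.cast (R := ℝ)) (eM2_c i); push_cast at this ⊢; linarith)
  simpa using this
lemma E2_ev : HasEv (ser sgi eE2) r (PQ (r^2) (r^2)) := by
  rw [← penta h0 h1]
  exact th_ev h0 h0 h1 3 1 (by norm_num) eE2
    (fun i => by have := eE2_c i; have := quad_ge 3 1 i (by norm_num); have := abs_nonneg i; omega)
    (fun i => by rw [← eE2_c i, zpow_natCast])
lemma E5_ev : HasEv (ser sgi eE5) (r^2) (PQ ((r^2)^5) ((r^2)^5)) := by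
  have r0 : 0 < r^5 := by positivity
  have r1 : r^5 < 1 := pow_lt_one₀ h0.le h1 (by norm_num)
  rw [show (r^2)^5 = (r^5)^2 by ring, ← penta r0 r1]
  exact th_ev (by positivity) r0 r1 3 1 (by norm_num) eE5
    (fun i => by have := eE5_c i; have := quad_ge 3 1 i (by norm_num); have := abs_nonneg i; omega)
    (fun i => by rw [pwr h0 h1 _ _ (eE5_c i), zpow_mul]; congr 1)
end

noncomputable def fa : ℤ⟦X⟧ := X * ser sgi eN * ser sgi eN2 ^ 2
noncomputable def fb : ℤ⟦X⟧ := ser sgi eM * ser sgi eM2 ^ 2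
noncomputable def fH : ℤ⟦X⟧ := fb^2 - 4*fa*fb - fa^2
noncomputable def fF : ℤ⟦X⟧ := 2 * X * ser sgi eE2 ^ 8 * ser sgi eE5 ^ 3 * pser ^ 7

lemma fF_ev {q : ℝ} (h0 : 0 < q) (h1 : q < 1) :
    HasEv fF q (2 * q * PQ (q^2) (q^2)^8 * PQ (q^5) (q^5)^3 / PQ q q ^ 7) := by
  have r0 : 0 < √q := Real.sqrt_pos.mpr h0
  have r1 : √q < 1 := by rw [Real.sqrt_lt' one_pos]; simpa using h1
  have e5 := E5_ev r0 r1
  rw [Real.sq_sqrt h0.le] at e5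
  rw [div_eq_mul_inv, ← inv_pow]
  exact ((((HasEv.two q).mul (HasEv.X q)).mul ((E2_ev h0 h1).pow 8)).mul (e5.pow 3)).mul ((pser_ev h0 h1).pow 7)

lemma dl_fa : dl fa = fa + X * dl (ser sgi eN) * ser sgi eN2 ^ 2 + 2 * X * ser sgi eN * ser sgi eN2 * dl (ser sgi eN2) := by
  unfold fa; rw [dl_mul, dl_mul, dl_sq, dl_X]; ring
lemma dl_fb : dl fb = dl (ser sgi eM) * ser sgi eM2 ^ 2 + 2 * ser sgi eM * ser sgi eM2 * dl (ser sgi eM2) := by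
  unfold fb; rw [dl_mul, dl_sq]; ring

lemma formal_main : fF * fH^2 = 2 * (fb * dl fa - fa * dl fb) * (fb^2 + fa*fb - fa^2) := by
  rw [← sub_eq_zero]
  refine ev_zero (fun q h0 h1 => ?_)
  have r0 : 0 < √q := Real.sqrt_pos.mpr h0
  have r1 : √q < 1 := by rw [Real.sqrt_lt' one_pos]; simpa using h1
  have hN := N_ev r0 r1
  have hM := M_ev r0 r1
  have hdN := dN_ev r0 r1
  have hdM := dM_ev r0 r1
  have main := real_main r0 r1 rfl rfl
  rw [Real.sq_sqrt h0.le] at hN hM hdN hdM main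
  have hN2 := N2_ev h0 h1
  have hM2 := M2_ev h0 h1
  have hdN2 := dN2_ev h0 h1
  have hdM2 := dM2_ev h0 h1
  have hX := HasEv.X q
  have h2 := HasEv.two q
  have ha : HasEv fa q _ := (hX.mul hN).mul (hN2.pow 2)
  have hb : HasEv fb q _ := hM.mul (hM2.pow 2)
  have hda := (ha.add ((hX.mul hdN).mul (hN2.pow 2))).add ((((h2.mul hX).mul hN).mul hN2).mul hdN2)
  rw [← dl_fa] at hda
  have hdb := (hdM.mul (hM2.pow 2)).add (((h2.mul hM).mul hM2).mul hdM2)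
  rw [← dl_fb] at hdb
  have hH : HasEv fH q _ := ((hb.pow 2).sub (((HasEv.four q).mul ha).mul hb)).sub (ha.pow 2)
  have L := (fF_ev h0 h1).mul (hH.pow 2)
  have R := (h2.mul ((hb.mul hda).sub (ha.mul hdb))).mul (((hb.pow 2).add (ha.mul hb)).sub (ha.pow 2))
  have D := L.sub R
  convert D using 1
  linear_combination -main

lemma lowN : X^5 ∣ ser sgi eN - (1 - X - X^4) := by
  rw [X_pow_dvd_iff]
  intro m hm
  interval_cases m <;> simp [coeff_ser, coeff_one, coeff_X, coeff_X_pow] <;> decide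
lemma lowM : X^5 ∣ ser sgi eM - (1 - X^2 - X^3) := by
  rw [X_pow_dvd_iff]
  intro m hm
  interval_cases m <;> simp [coeff_ser, coeff_one, coeff_X, coeff_X_pow] <;> decide
lemma lowN2 : X^5 ∣ ser sgi eN2 - (1 - X^2) := by
  rw [X_pow_dvd_iff]
  intro m hm
  interval_cases m <;> simp [coeff_ser, coeff_one, coeff_X, coeff_X_pow] <;> decide
lemma lowM2 : X^5 ∣ ser sgi eM2 - (1 - X^4) := by
  rw [X_pow_dvd_iff]
  intro m hm
  interval_cases m <;> simp [coeff_ser, coeff_one, coeff_X, coeff_X_pow] <;> decide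


lemma low_alg {R : Type*} [CommRing R] (x N M N2 M2 : R) (hx : x^5 = 0) (hN : N = 1 - x - x^4)
    (hM : M = 1 - x^2 - x^3) (hN2 : N2 = 1 - x^2) (hM2 : M2 = 1 - x^4) :
    2 * (x * N * N2^2) * (M * M2^2) + (x * N * N2^2)^2 - (2*x+7*x^2+18*x^3+42*x^4) *
      ((M * M2^2)^2 - 4 * (x * N * N2^2) * (M * M2^2) - (x * N * N2^2)^2) = 0 := by
  subst hN hM hN2 hM2
  linear_combination ((92)*x^0 + (-180)*x^1 + (-298)*x^2 + (497)*x^3 + (350)*x^4 + (-186)*x^5 + (42)*x^6 + (-507)*x^7 + (-758)*x^8 + (243)*x^9 + (772)*x^10 + (418)*x^11 + (260)*x^12 + (-206)*x^13 + (-678)*x^14 + (-203)*x^15 + (30)*x^16 + (83)*x^17 + (290)*x^18 + (83)*x^19 + (-102)*x^20 + (-42)*x^21) * hx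

lemma low_dvd : X^5 ∣ 2 * fa * fb + fa^2 - (2*X+7*X^2+18*X^3+42*X^4) * fH := by
  have key : ∀ z : ℤ⟦X⟧, X^5 ∣ z ↔ Ideal.Quotient.mk (Ideal.span {(X:ℤ⟦X⟧)^5}) z = 0 := fun z => by
    rw [Ideal.Quotient.eq_zero_iff_mem, Ideal.mem_span_singleton]
  have a := (key _).mp lowN
  have b := (key _).mp lowM
  have c := (key _).mp lowN2
  have d := (key _).mp lowM2
  have e := (key _).mp (dvd_refl _)
  rw [key]
  unfold fH fa fb
  simp only [map_sub, map_add, map_mul, map_pow, map_one, map_ofNat] at *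
  exact low_alg _ _ _ _ _ e (sub_eq_zero.mp a) (sub_eq_zero.mp b) (sub_eq_zero.mp c) (sub_eq_zero.mp d)

lemma fH_const : constantCoeff fH = 1 := by
  have a : constantCoeff (ser sgi eM) = 1 := by rw [← coeff_zero_eq_constantCoeff_apply, coeff_ser]; decide
  have b : constantCoeff (ser sgi eM2) = 1 := by rw [← coeff_zero_eq_constantCoeff_apply, coeff_ser]; decide
  simp [fH, fa, fb, a, b]

theorem stmt_10 :
    ∃ d : ℕ → ℤ,
      (∀ q : ℝ, 0 < q → q < 1 →
        Summable (fun n : ℕ => |(n : ℝ) * (d n : ℝ) * q ^ n|) ∧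
        2 * q * eulerE (q ^ 2) ^ 8 * eulerE (q ^ 5) ^ 3 / eulerE q ^ 7
          = ∑' n : ℕ, (n : ℝ) * (d n : ℝ) * q ^ n) ∧
      d 1 = 2 ∧ d 2 = 7 ∧ d 3 = 18 ∧ d 4 = 42 := by
  have hu : IsUnit fH := by rw [isUnit_iff_constantCoeff, fH_const]; exact isUnit_one
  obtain ⟨K, hK⟩ := hu.exists_right_inv
  obtain ⟨G, hG⟩ : ∃ G : ℤ⟦X⟧, G * fH = 2 * fa * fb + fa^2 := ⟨K * (2 * fa * fb + fa^2), by
    linear_combination (2 * fa * fb + fa^2) * hK⟩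
  have hd : dl G * fH + G * dl fH = 2 * dl fa * fb + 2 * fa * dl fb + 2 * fa * dl fa := by
    have := congrArg dl hG
    have t : dl (2 : ℤ⟦X⟧) = 0 := by simpa using dl_C 2
    rw [dl_mul, dl_add, dl_mul, dl_mul, dl_sq, t] at this
    rw [this]; ring
  have hdH : dl fH = 2 * fb * dl fb - 4 * dl fa * fb - 4 * fa * dl fb - 2 * fa * dl fa := by
    have t : dl (4 : ℤ⟦X⟧) = 0 := by simpa using dl_C 4
    unfold fH
    rw [dl_sub, dl_sub, dl_mul, dl_mul, dl_sq, dl_sq, t]; ring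
  have hGF : dl G = fF := by
    have h2 : dl G * fH^2 = fF * fH^2 := by
      rw [formal_main]
      rw [hdH] at hd
      have e : fH = fb^2 - 4*fa*fb - fa^2 := rfl
      linear_combination fH * hd - (2 * fb * dl fb - 4 * dl fa * fb - 4 * fa * dl fb - 2 * fa * dl fa) * hG
        + (2 * dl fa * fb + 2 * fa * dl fb + 2 * fa * dl fa) * e
    exact (hu.pow 2).mul_right_cancel h2
  have hlow : X^5 ∣ G - (2*X+7*X^2+18*X^3+42*X^4) := by
    have := low_dvd
    rw [← hG, ← sub_mul] at this
    exact (hu.dvd_mul_right).mp this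
  rw [X_pow_dvd_iff] at hlow
  have lit : ∀ k : ℕ, ∀ (c : ℕ) [c.AtLeastTwo] (j : ℕ), coeff k ((OfNat.ofNat c : ℤ⟦X⟧) * X^j) = if k = j then (OfNat.ofNat c : ℤ) else 0 := by
    intro k c _ j
    rw [show (OfNat.ofNat c : ℤ⟦X⟧) = C (OfNat.ofNat c : ℤ) by rw [map_ofNat], coeff_C_mul, coeff_X_pow]
    simp
  refine ⟨fun n => coeff n G, ?_, ?_, ?_, ?_, ?_⟩
  · intro q h0 h1
    have hF := fF_ev h0 h1
    rw [← hGF] at hF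
    have e : ∀ n : ℕ, ((coeff n (dl G) : ℤ) : ℝ) * q^n = (n : ℝ) * ((coeff n G : ℤ) : ℝ) * q^n := by
      intro n; rw [coeff_dl]; push_cast; rfl
    have s := hF.1
    have t := hF.2
    simp only [e, Real.norm_eq_abs] at s t
    refine ⟨s, ?_⟩
    rw [t, eulerE_eq, eulerE_eq, eulerE_eq]
  all_goals beta_reduce
  · have := hlow 1 (by norm_num)
    rw [show (2*X : ℤ⟦X⟧) = 2*X^1 by ring] at this
    simp only [map_sub, map_add, lit] at this
    norm_num at this; linarith
  · have := hlow 2 (by norm_num)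
    rw [show (2*X : ℤ⟦X⟧) = 2*X^1 by ring] at this
    simp only [map_sub, map_add, lit] at this
    norm_num at this; linarith
  · have := hlow 3 (by norm_num)
    rw [show (2*X : ℤ⟦X⟧) = 2*X^1 by ring] at this
    simp only [map_sub, map_add, lit] at this
    norm_num at this; linarith
  · have := hlow 4 (by norm_num)
    rw [show (2*X : ℤ⟦X⟧) = 2*X^1 by ring] at this
    simp only [map_sub, map_add, lit] at this
    norm_num at this; linarith
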